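/- Asian option duality gap: Let 𝔓 = Ω and assume μ₁,…,μ_n satisfy Assumption A with M⁻_μ ≠ ∅. For the Asian payoff G(s₁,…,s_n) = ((s₁ + … + s_n)/n − K)⁺, the recursively defined functions β_i of the duality-gap theorem are the constants β_i = (n − i)/n for i = 0,…,n−1, and the put-based superhedging price satisfies V^{(p)}_μ(G) = sup_{ℙ ∈ M⁻_μ} E_ℙ[G] + (1/n) Σ_{i=1}^n (s₀ − ∫ x μ_i(dx)). -/

import Mathlib

open MeasureTheory Set Filter Topology
open scoped ENNReal NNReal Classical

noncomputable section

namespace RobustFin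

/-- Canonical path space: the values `S₀, S₁, …, S_n` of the asset. -/
abbrev Path (n : ℕ) := Fin (n + 1) → ℝ

/-- Paths starting at `s₀` with nonnegative coordinates: the canonical space `Ω`. -/
def Omega (n : ℕ) (s₀ : ℝ) : Set (Path n) := {ω | ω 0 = s₀ ∧ ∀ i, 0 ≤ ω i}

/-- The first `j` coordinates `S₁, …, S_j` of a path. -/
def restr {n : ℕ} (j : Fin n) (ω : Path n) : Fin j → ℝ :=
  fun i => ω ⟨(i : ℕ) + 1, by have h1 := i.isLt; have h2 := j.isLt; omega⟩

/-- The coordinates `S₁, …, S_n` of a path. -/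
def tailCoords {n : ℕ} (ω : Path n) : Fin n → ℝ := fun i => ω i.succ

/-- A dynamic trading strategy: bounded measurable positions `Δ_j(S₁,…,S_j)`. -/
structure Dyn (n : ℕ) where
  pos : (j : Fin n) → (Fin j → ℝ) → ℝ
  meas : ∀ j, Measurable (pos j)
  bdd : ∀ j, ∃ C, ∀ x, |pos j x| ≤ C

/-- No short selling: all dynamic positions are nonnegative. -/
def Dyn.Nonneg {n : ℕ} (D : Dyn n) : Prop := ∀ j x, 0 ≤ D.pos j x

/-- Gains from dynamic trading: `Σ_j Δ_j(S₁,…,S_j)(S_{j+1} − S_j)`. -/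
def Dyn.gains {n : ℕ} (D : Dyn n) (ω : Path n) : ℝ :=
  ∑ j : Fin n, D.pos j (restr j ω) * (ω j.succ - ω j.castSucc)

/-- A static option portfolio: a constant (cash) position plus a finite linear
combination of options with maturity indices `idx` and nonnegative strikes. -/
structure Static (n : ℕ) where
  const : ℝ
  m : ℕ
  coeff : Fin m → ℝ
  idx : Fin m → Fin n
  strike : Fin m → ℝ
  strike_nonneg : ∀ k, 0 ≤ strike k

/-- Payoff of the portfolio when the options are call options. -/
def Static.callPayoff {n : ℕ} (X : Static n) (ω : Path n) : ℝ :=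
  X.const + ∑ k, X.coeff k * max (ω (X.idx k).succ - X.strike k) 0

/-- Payoff of the portfolio when the options are put options. -/
def Static.putPayoff {n : ℕ} (X : Static n) (ω : Path n) : ℝ :=
  X.const + ∑ k, X.coeff k * max (X.strike k - ω (X.idx k).succ) 0

/-- Price of a static portfolio, given the unit option prices `c i K`;
this is the (unique) linear pricing functional determined by the prices. -/
def Static.price {n : ℕ} (X : Static n) (c : Fin n → ℝ → ℝ) : ℝ :=
  X.const + ∑ k, X.coeff k * c (X.idx k) (X.strike k)

/-- Expectation of a real payoff, valued in `EReal`, with the convention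
`∞ − ∞ = −∞` (in `EReal`, `⊤ - ⊤ = ⊥`). -/
def eexp {n : ℕ} (P : Measure (Path n)) (f : Path n → ℝ) : EReal :=
  ((∫⁻ ω, ENNReal.ofReal (f ω) ∂P : ℝ≥0∞) : EReal) -
    ((∫⁻ ω, ENNReal.ofReal (-(f ω)) ∂P : ℝ≥0∞) : EReal)

/-- The positive part of an extended real number, in `ℝ≥0∞`. -/
def posE (x : EReal) : ℝ≥0∞ := if x = ⊤ then ⊤ else ENNReal.ofReal x.toReal

/-- Expectation of an `EReal`-valued payoff, with the convention `∞ − ∞ = −∞`. -/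
def eexpE {n : ℕ} (P : Measure (Path n)) (f : Path n → EReal) : EReal :=
  ((∫⁻ ω, posE (f ω) ∂P : ℝ≥0∞) : EReal) - ((∫⁻ ω, posE (-(f ω)) ∂P : ℝ≥0∞) : EReal)

/-- A market calibrated model for the market with static payoffs `pay` (calls or puts),
prices `c` and prediction set `P`. -/
def Calibrated {n : ℕ} (pay : Static n → Path n → ℝ) (c : Fin n → ℝ → ℝ)
    (P : Set (Path n)) (Q : Measure (Path n)) : Prop :=
  IsProbabilityMeasure Q ∧ Q P = 1 ∧
    ∀ (X : Static n) (D : Dyn n), D.Nonneg →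
      eexp Q (fun ω => pay X ω + D.gains ω) ≤ (X.price c : EReal)

/-- A weak free lunch with vanishing risk. -/
def WFLVR {n : ℕ} (pay : Static n → Path n → ℝ) (c : Fin n → ℝ → ℝ)
    (P : Set (Path n)) : Prop :=
  ∃ (Xs : ℕ → Static n) (Ds : ℕ → Dyn n) (X : Static n) (D : Dyn n) (L : ℝ),
    (∀ k, (Ds k).Nonneg) ∧ D.Nonneg ∧
    (∀ ω ∈ P, Tendsto (fun k => pay (Xs k) ω + (Ds k).gains ω) atTop (nhds 0)) ∧
    (∀ k, ∀ ω ∈ P, pay X ω + D.gains ω ≤ pay (Xs k) ω + (Ds k).gains ω) ∧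
    Tendsto (fun k => (Xs k).price c) atTop (nhds L) ∧ L < 0

/-- A robust uniformly strong arbitrage. -/
def RobustArbitrage {n : ℕ} (pay : Static n → Path n → ℝ) (c : Fin n → ℝ → ℝ)
    (P : Set (Path n)) : Prop :=
  ∃ (X : Static n) (D : Dyn n), D.Nonneg ∧ X.price c < 0 ∧
    ∀ ω ∈ P, 0 ≤ pay X ω + D.gains ω

/-- The superhedging price of `G` over semi-static strategies (no short selling). -/
def V {n : ℕ} (pay : Static n → Path n → ℝ) (c : Fin n → ℝ → ℝ)
    (P : Set (Path n)) (G : Path n → EReal) : EReal :=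
  sInf {q : EReal | ∃ (X : Static n) (D : Dyn n), D.Nonneg ∧ q = (X.price c : EReal) ∧
    ∀ ω ∈ P, G ω ≤ ((pay X ω + D.gains ω : ℝ) : EReal)}

/-- The superhedging price of `G` when the dynamic positions may take both signs. -/
def Vsigned {n : ℕ} (pay : Static n → Path n → ℝ) (c : Fin n → ℝ → ℝ)
    (P : Set (Path n)) (G : Path n → EReal) : EReal :=
  sInf {q : EReal | ∃ (X : Static n) (D : Dyn n), q = (X.price c : EReal) ∧
    ∀ ω ∈ P, G ω ≤ ((pay X ω + D.gains ω : ℝ) : EReal)}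

/-- `Π_μ`: probability measures on the path space with marginals `δ_{s₀}, μ₁, …, μ_n`. -/
def PiMu {n : ℕ} (s₀ : ℝ) (μ : Fin n → Measure ℝ) : Set (Measure (Path n)) :=
  {π | IsProbabilityMeasure π ∧ π (Omega n s₀) = 1 ∧
       ∀ i : Fin n, π.map (fun ω => ω i.succ) = μ i}

/-- The coordinate process is a supermartingale in its natural filtration:
for every Borel `A ⊆ ℝ₊^j`, `∫ 1_A(S₁,…,S_j)(S_{j+1} − S_j) dπ ≤ 0`. -/
def IsSupermartingaleLaw {n : ℕ} (π : Measure (Path n)) : Prop :=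
  ∀ (j : Fin n) (A : Set (Fin j → ℝ)), MeasurableSet A →
    ∫ ω, Set.indicator A (fun _ => (1 : ℝ)) (restr j ω) * (ω j.succ - ω j.castSucc) ∂π ≤ 0

/-- `M⁻_μ`: calibrated supermartingale measures. -/
def MSet {n : ℕ} (s₀ : ℝ) (μ : Fin n → Measure ℝ) : Set (Measure (Path n)) :=
  {π ∈ PiMu s₀ μ | IsSupermartingaleLaw π}

/-- `M⁻_{μ,𝔓}`: calibrated supermartingale measures giving full mass to `P`. -/
def MSetP {n : ℕ} (s₀ : ℝ) (μ : Fin n → Measure ℝ) (P : Set (Path n)) :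
    Set (Measure (Path n)) :=
  {π ∈ MSet s₀ μ | π P = 1}

/-- Assumption A on the marginals. -/
def AssumptionA {n : ℕ} (s₀ : ℝ) (μ : Fin n → Measure ℝ) : Prop :=
  (∀ i, ∫ x, x ∂(μ i) ≤ s₀) ∧
  (∀ i j : Fin n, i ≤ j → ∫ x, x ∂(μ j) ≤ ∫ x, x ∂(μ i)) ∧
  (∀ φ : ℝ → ℝ, ConcaveOn ℝ Set.univ φ → Monotone φ → (∀ x, 0 ≤ φ x) →
    ∀ i j : Fin n, i ≤ j → ∫ x, φ x ∂(μ j) ≤ ∫ x, φ x ∂(μ i))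

/-- Condition C (i): each `c_i` is nonnegative, convex and nonincreasing on `ℝ₊`. -/
def CondC1 {n : ℕ} (c : Fin n → ℝ → ℝ) : Prop :=
  ∀ i, (∀ x, 0 ≤ x → 0 ≤ c i x) ∧ ConvexOn ℝ (Set.Ici 0) (c i) ∧ AntitoneOn (c i) (Set.Ici 0)

/-- Condition C (ii): `s₀ ≥ c₁(0) ≥ … ≥ c_n(0) ≥ 0` and `c_i'(0+) ≥ −1`
(the latter expressed, for convex `c_i`, through the slopes at `0`). -/
def CondC2 {n : ℕ} (s₀ : ℝ) (c : Fin n → ℝ → ℝ) : Prop :=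
  (∀ i, c i 0 ≤ s₀) ∧ (∀ i j : Fin n, i ≤ j → c j 0 ≤ c i 0) ∧ (∀ i, 0 ≤ c i 0) ∧
    (∀ i, ∀ K : ℝ, 0 < K → c i 0 - K ≤ c i K)

/-- Condition C (iii): `c_i(K) → 0` as `K → ∞`. -/
def CondC3 {n : ℕ} (c : Fin n → ℝ → ℝ) : Prop :=
  ∀ i, Tendsto (c i) atTop (nhds 0)

/-- Condition C (iv): for every `x ≥ 0`, `c_i(0) − c_i(x)` is nonincreasing in `i`. -/
def CondC4 {n : ℕ} (c : Fin n → ℝ → ℝ) : Prop :=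
  ∀ x : ℝ, 0 ≤ x → ∀ i j : Fin n, i ≤ j → c j 0 - c j x ≤ c i 0 - c i x

/-- Condition C. -/
def CondC {n : ℕ} (s₀ : ℝ) (c : Fin n → ℝ → ℝ) : Prop :=
  CondC1 c ∧ CondC2 s₀ c ∧ CondC3 c ∧ CondC4 c

/-- Condition P (i). -/
def CondP1 {n : ℕ} (p : Fin n → ℝ → ℝ) : Prop :=
  ∀ i, (∀ x, 0 ≤ x → 0 ≤ p i x) ∧ ConvexOn ℝ (Set.Ici 0) (p i) ∧ MonotoneOn (p i) (Set.Ici 0)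

/-- Condition P (ii): `s₀ ≥ lim (x − p₁(x)) ≥ … ≥ 0` and `0 ≤ p_i'(0+) ≤ 1`. -/
def CondP2 {n : ℕ} (s₀ : ℝ) (p : Fin n → ℝ → ℝ) : Prop :=
  (∃ L : Fin n → ℝ,
    (∀ i, Tendsto (fun x => x - p i x) atTop (nhds (L i))) ∧
    (∀ i, L i ≤ s₀) ∧ (∀ i j : Fin n, i ≤ j → L j ≤ L i) ∧ (∀ i, 0 ≤ L i)) ∧
  (∃ d : Fin n → ℝ,
    (∀ i, Tendsto (fun K => (p i K - p i 0) / K) (nhdsWithin 0 (Set.Ioi 0)) (nhds (d i))) ∧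
    (∀ i, 0 ≤ d i ∧ d i ≤ 1))

/-- Condition P (iii): `p_i(K) → 0` as `K → 0` (within `ℝ₊`). -/
def CondP3 {n : ℕ} (p : Fin n → ℝ → ℝ) : Prop :=
  ∀ i, Tendsto (p i) (nhdsWithin 0 (Set.Ici 0)) (nhds 0)

/-- Condition P (iv): `p_i(x)` is nondecreasing in `i`. -/
def CondP4 {n : ℕ} (p : Fin n → ℝ → ℝ) : Prop :=
  ∀ x : ℝ, 0 ≤ x → ∀ i j : Fin n, i ≤ j → p i x ≤ p j x

/-- Condition P. -/
def CondP {n : ℕ} (s₀ : ℝ) (p : Fin n → ℝ → ℝ) : Prop :=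
  CondP1 p ∧ CondP2 s₀ p ∧ CondP3 p ∧ CondP4 p

/-- The measures `μ_i` defined from the put prices by `μ_i([0,K]) = p_i'(K)`;
equivalently, `p_i(K) = ∫ (K − x)⁺ μ_i(dx)`. -/
def PutPricesFrom {n : ℕ} (p : Fin n → ℝ → ℝ) (μ : Fin n → Measure ℝ) : Prop :=
  (∀ i, IsProbabilityMeasure (μ i)) ∧ (∀ i, μ i (Set.Iio 0) = 0) ∧
  (∀ i, Integrable (fun x => x) (μ i)) ∧
  (∀ i, ∀ K : ℝ, 0 ≤ K → p i K = ∫ x, max (K - x) 0 ∂(μ i))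

/-- The path `(s₀, s₁, …, s_i, x, s_{i+2}, …, s_n)`. -/
def mkPath {n : ℕ} (s₀ : ℝ) (i : Fin n) (s : Fin i → ℝ) (x : ℝ)
    (t : Fin (n - ((i : ℕ) + 1)) → ℝ) : Path n := fun j =>
  if h0 : (j : ℕ) = 0 then s₀
  else if h1 : (j : ℕ) ≤ (i : ℕ) then
    s ⟨(j : ℕ) - 1, by have := j.isLt; have := i.isLt; omega⟩
  else if h2 : (j : ℕ) = (i : ℕ) + 1 then x
  else t ⟨(j : ℕ) - (i : ℕ) - 2, by have := j.isLt; have := i.isLt; omega⟩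

/-- The family `β_i : ℝ₊^i → ℝ` defined recursively by `β_n = 0` and
`β_i(s₁,…,s_i) = (sup_{s_{i+2},…,s_n} limsup_{x→∞} ((β_{i+1}(s₁,…,s_i,x)
 + G(s₁,…,s_i,x,s_{i+2},…,s_n)/x)·1_𝔓)) ∨ 0`. -/
def IsBetaFamily {n : ℕ} (s₀ : ℝ) (P : Set (Path n)) (G : (Fin n → ℝ) → EReal)
    (β : (i : Fin (n + 1)) → (Fin i → ℝ) → ℝ) : Prop :=
  (∀ s, β (Fin.last n) s = 0) ∧
  ∀ (i : Fin n) (s : Fin i → ℝ), (∀ k, 0 ≤ s k) →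
    (β ⟨(i : ℕ), by have := i.isLt; omega⟩ s : EReal) =
      max 0 (⨆ (t : Fin (n - ((i : ℕ) + 1)) → ℝ) (_ : ∀ k, 0 ≤ t k),
        Filter.limsup (fun x : ℝ =>
          if mkPath s₀ i s x t ∈ P then
            ((β ⟨(i : ℕ) + 1, by have := i.isLt; omega⟩ (Fin.snoc s x) : ℝ) : EReal)
              + G (tailCoords (mkPath s₀ i s x t)) * ((x⁻¹ : ℝ) : EReal)
          else 0) Filter.atTop)

/-- Gains of the dynamic strategy `(β_i)`: `β₀(S₁ − s₀) + Σ_i β_i(S₁,…,S_i)(S_{i+1} − S_i)`. -/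
def gainsOf {n : ℕ} (β : (i : Fin (n + 1)) → (Fin i → ℝ) → ℝ) (ω : Path n) : ℝ :=
  ∑ j : Fin n, β ⟨(j : ℕ), by have := j.isLt; omega⟩ (restr j ω) * (ω j.succ - ω j.castSucc)

/-- The penalty function `λ_𝔓(s₁,…,s_n) = (1 + s₁ + … + s_n)·1{(s₁,…,s_n) ∉ 𝔓}`. -/
def lambdaP {n : ℕ} (P : Set (Path n)) (ω : Path n) : ℝ :=
  if ω ∈ P then 0 else 1 + ∑ i : Fin n, ω i.succ

/-- `min(s₀, s₁, …, s_m)`. -/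
def pmin {m : ℕ} (s₀ : ℝ) (s : Fin m → ℝ) : ℝ :=
  Finset.univ.inf' Finset.univ_nonempty
    (fun j : Fin (m + 1) =>
      if h : (j : ℕ) = 0 then s₀ else s ⟨(j : ℕ) - 1, by have := j.isLt; omega⟩)

/-- `max(s₀, s₁, …, s_m)`. -/
def pmax {m : ℕ} (s₀ : ℝ) (s : Fin m → ℝ) : ℝ :=
  Finset.univ.sup' Finset.univ_nonempty
    (fun j : Fin (m + 1) =>
      if h : (j : ℕ) = 0 then s₀ else s ⟨(j : ℕ) - 1, by have := j.isLt; omega⟩)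

/-!
Suppose that `G s = w ⬝ᵥ s + O(1)` on `ℝ₊ⁿ`; for the Asian option all `w_i` are `1 / n`. Holding
`b_i = w_i + ⋯ + w_{n-1}` units of the asset between the dates `i` and `i + 1` gains
`∑ k, w_k (S_{k+1} - s₀)`, so that on `Ω` the claim `G` is a bounded continuous claim `F` plus the
gains of this strategy. These gains have expectation `-∑ k, w_k (s₀ - ∫ x dμ_k)` in every calibrated
model, but they do not reduce the superhedging price: if a claim bounded below is superhedged by
puts and arbitrary positions, the positions must be nonnegative, as one sees by letting the asset
jump to `x → ∞` and stay there. Hence the short-selling constraint does not bind, and the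
superhedging prices of `G` and `F` agree. The gap of `G` is the lost expectation, because `F` has
no gap.

For bounded continuous claims the superhedging price is sublinear, and by Hahn–Banach it is attained
at `F` by a linear functional that it dominates. Puts superhedge the complement of a large compact
set cheaply, so this functional is tight and the Riesz representation theorem turns it into a
measure, which domination by the superhedging price forces into `M⁻_μ`.

The `β_i` are the `b_i`: in the recursion, `β_i = β_{i+1} + w_i` by comparing slopes at infinity.
-/

section Expectation

lemma posE_coe (r : ℝ) : posE r = ENNReal.ofReal r := by
  simp [posE]

lemma eexpE_coe {n : ℕ} {Q : Measure (Path n)} {f : Path n → ℝ} (hf : Integrable f Q) :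
    eexpE Q (fun ω => (f ω : EReal)) = ((∫ ω, f ω ∂Q : ℝ) : EReal) := by
  have hneg : ∫⁻ ω, ENNReal.ofReal (-f ω) ∂Q ≠ ∞ := hf.neg.lintegral_lt_top.ne
  rw [integral_eq_lintegral_pos_part_sub_lintegral_neg_part hf, EReal.coe_sub,
    EReal.coe_ennreal_toReal hf.lintegral_lt_top.ne, EReal.coe_ennreal_toReal hneg]
  simp only [eexpE, ← EReal.coe_neg, posE_coe]

end Expectation

section WeightedLaw

variable {X Y : Type*} [MeasurableSpace X] [MeasurableSpace Y]

/-- The law of `r` under `Q` weighted by the positive part of `Z`. Its comparison with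
`weightedLaw Q r (-Z)` expresses `E[Z | r] ≤ 0` without conditional expectations. -/
def weightedLaw (Q : Measure X) (r : X → Y) (Z : X → ℝ) : Measure Y :=
  (Q.withDensity fun x => ENNReal.ofReal (Z x)).map r

variable {Q : Measure X} {r : X → Y} {Z : X → ℝ}

lemma isFiniteMeasure_weightedLaw (hZ : Integrable Z Q) :
    IsFiniteMeasure (weightedLaw Q r Z) := by
  have := isFiniteMeasure_withDensity_ofReal hZ.2
  exact inferInstanceAs (IsFiniteMeasure (Measure.map r _))

lemma lintegral_weightedLaw (hr : Measurable r) (hZ : AEMeasurable Z Q) {φ : Y → ℝ≥0}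
    (hφ : Measurable φ) :
    ∫⁻ y, φ y ∂weightedLaw Q r Z = ∫⁻ x, ENNReal.ofReal (φ (r x) * Z x) ∂Q := by
  rw [weightedLaw, lintegral_map hφ.coe_nnreal_ennreal hr]
  refine (lintegral_withDensity_eq_lintegral_mul₀ hZ.ennreal_ofReal
    (hφ.comp hr).coe_nnreal_ennreal.aemeasurable).trans (lintegral_congr fun x => ?_)
  rw [ENNReal.ofReal_mul (φ (r x)).coe_nonneg, ENNReal.ofReal_coe_nnreal, Pi.mul_apply, mul_comm]
  rfl

lemma integral_comp_mul_nonpos_iff (hr : Measurable r) (hZ : Integrable Z Q) {φ : Y → ℝ≥0}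
    (hφ : Measurable φ) {C : ℝ≥0} (hC : ∀ y, φ y ≤ C) :
    ∫ x, φ (r x) * Z x ∂Q ≤ 0 ↔
      ∫⁻ y, φ y ∂weightedLaw Q r Z ≤ ∫⁻ y, φ y ∂weightedLaw Q r (-Z) := by
  have hφZ : Integrable (fun x => φ (r x) * Z x) Q :=
    hZ.bdd_mul (hφ.comp hr).coe_nnreal_real.aestronglyMeasurable (c := C)
      (Eventually.of_forall fun x => by simpa using hC (r x))
  have hneg : ∫⁻ x, ENNReal.ofReal (-(φ (r x) * Z x)) ∂Q ≠ ∞ := hφZ.neg.lintegral_lt_top.ne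
  rw [lintegral_weightedLaw hr hZ.aemeasurable hφ, lintegral_weightedLaw hr hZ.neg.aemeasurable hφ,
    integral_eq_lintegral_pos_part_sub_lintegral_neg_part hφZ, sub_nonpos,
    ENNReal.toReal_le_toReal hφZ.lintegral_lt_top.ne hneg]
  simp only [Pi.neg_apply, mul_neg]

lemma weightedLaw_le_iff_indicator (hr : Measurable r) (hZ : Integrable Z Q) :
    weightedLaw Q r Z ≤ weightedLaw Q r (-Z) ↔
      ∀ A, MeasurableSet A → ∫ x, A.indicator (fun _ => (1 : ℝ)) (r x) * Z x ∂Q ≤ 0 := by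
  refine Measure.le_iff.trans (forall₂_congr fun A hA => ?_)
  have h := integral_comp_mul_nonpos_iff hr hZ (φ := A.indicator fun _ => 1)
    (measurable_const.indicator hA) (C := 1) (indicator_le fun _ _ => le_rfl)
  simp only [NNReal.coe_indicator, NNReal.coe_one, ENNReal.coe_indicator, ENNReal.coe_one,
    lintegral_indicator_const hA, one_mul] at h
  exact h.symm

end WeightedLaw

section BoundedContinuousTests

open BoundedContinuousFunction TopologicalSpace

variable {X Y : Type*} [MeasurableSpace X] [TopologicalSpace Y] [PseudoMetrizableSpace Y]
  [MeasurableSpace Y] [BorelSpace Y]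

lemma measure_le_of_forall_lintegral_le {m₁ m₂ : Measure Y} [IsFiniteMeasure m₁]
    [IsFiniteMeasure m₂]
    (h : ∀ f : Y →ᵇ ℝ≥0, (∀ y, f y ≤ 1) → ∫⁻ y, f y ∂m₁ ≤ ∫⁻ y, f y ∂m₂) : m₁ ≤ m₂ := by
  have closed_le : ∀ F : Set Y, IsClosed F → m₁ F ≤ m₂ F := fun F hF =>
    le_of_tendsto_of_tendsto' (HasOuterApproxClosed.tendsto_lintegral_apprSeq hF m₁)
      (HasOuterApproxClosed.tendsto_lintegral_apprSeq hF m₂) fun k =>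
        h _ (HasOuterApproxClosed.apprSeq_apply_le_one hF k)
  refine Measure.le_iff.2 fun A hA => ?_
  rw [hA.measure_eq_iSup_isClosed_of_ne_top (measure_ne_top m₁ A)]
  exact iSup₂_le fun F hFA => iSup_le fun hF => (closed_le F hF).trans (measure_mono hFA)

lemma weightedLaw_le_of_continuous {Q : Measure X} {r : X → Y} {Z : X → ℝ} (hr : Measurable r)
    (hZ : Integrable Z Q)
    (h : ∀ φ : Y →ᵇ ℝ≥0, (∀ y, φ y ≤ 1) → ∫ x, φ (r x) * Z x ∂Q ≤ 0) :
    weightedLaw Q r Z ≤ weightedLaw Q r (-Z) := by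
  have := isFiniteMeasure_weightedLaw (r := r) hZ
  have := isFiniteMeasure_weightedLaw (r := r) hZ.neg
  exact measure_le_of_forall_lintegral_le fun φ hφ =>
    (integral_comp_mul_nonpos_iff hr hZ φ.continuous.measurable hφ).1 (h φ hφ)

lemma ae_mem_of_forall_integral_le {Q : Measure Y} [IsProbabilityMeasure Q] {F : Set Y}
    (hF : IsClosed F)
    (h : ∀ (f : Y →ᵇ ℝ) (a : ℝ), (∀ y ∈ F, f y ≤ a) → ∫ y, f y ∂Q ≤ a) : ∀ᵐ y ∂Q, y ∈ F := by
  have one_le : ∀ k, 1 ≤ ∫⁻ y, hF.apprSeq k y ∂Q := by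
    intro k
    let f : Y →ᵇ ℝ := .ofNormedAddCommGroup (fun y => -(hF.apprSeq k y : ℝ))
      (NNReal.continuous_coe.comp (hF.apprSeq k).continuous).neg 1 fun y => by
        simpa using HasOuterApproxClosed.apprSeq_apply_le_one hF k y
    have hf := h f (-1) fun y hy => by
      simp [f, HasOuterApproxClosed.apprSeq_apply_eq_one hF k hy]
    change ∫ y, -(hF.apprSeq k y : ℝ) ∂Q ≤ -1 at hf
    rw [integral_neg, ← toReal_lintegral_coe_eq_integral, neg_le_neg_iff, ← ENNReal.toReal_one,
      ENNReal.toReal_le_toReal ENNReal.one_ne_top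
        (lintegral_lt_top_of_nnreal Q (hF.apprSeq k)).ne] at hf
    exact hf
  have hQF : 1 ≤ Q F := ge_of_tendsto' (HasOuterApproxClosed.tendsto_lintegral_apprSeq hF Q) one_le
  exact (prob_compl_eq_zero_iff hF.measurableSet).2 (le_antisymm prob_le_one hQF)

end BoundedContinuousTests

section PutIntegrals

lemma integrable_put {ν : Measure ℝ} [IsFiniteMeasure ν] (hν : ∀ᵐ x ∂ν, 0 ≤ x) (K : ℝ) :
    Integrable (fun x => max (K - x) 0) ν := by
  refine .of_bound (by fun_prop) |K| (hν.mono fun x hx => ?_)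
  rw [Real.norm_eq_abs, abs_of_nonneg (le_max_right _ _)]
  exact max_le (by linarith [le_abs_self K]) (abs_nonneg K)

/-- The normalised put spread `((a + ε − x)⁺ − (a − x)⁺) / ε`, a continuous approximation of the
indicator of `(-∞, a]`. -/
def putSpread (a ε x : ℝ) : ℝ := (max (a + ε - x) 0 - max (a - x) 0) / ε

lemma norm_putSpread_le_one {ε : ℝ} (hε : 0 < ε) (a x : ℝ) : ‖putSpread a ε x‖ ≤ 1 := by
  have h := abs_max_sub_max_le_abs (a + ε - x) (a - x) 0
  rw [show a + ε - x - (a - x) = ε by ring, abs_of_pos hε] at h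
  rwa [putSpread, norm_div, Real.norm_eq_abs, Real.norm_of_nonneg hε.le, div_le_one hε]

lemma tendsto_putSpread (a x : ℝ) :
    Tendsto (fun ε => putSpread a ε x) (𝓝[>] 0) (𝓝 ((Iic a).indicator 1 x)) := by
  by_cases hx : x ≤ a
  · rw [indicator_of_mem (mem_Iic.2 hx)]
    refine tendsto_const_nhds.congr' ?_
    filter_upwards [self_mem_nhdsWithin] with ε (hε : 0 < ε)
    rw [putSpread, max_eq_left (by linarith), max_eq_left (by linarith)]
    simp [hε.ne', div_self]
  · rw [indicator_of_notMem (notMem_Iic.2 (not_le.1 hx))]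
    refine tendsto_const_nhds.congr' ?_
    have hax : 0 < x - a := sub_pos.2 (not_le.1 hx)
    filter_upwards [Ioo_mem_nhdsGT hax] with ε hε
    rw [putSpread, max_eq_right (by linarith [hε.2]), max_eq_right (by linarith), sub_self,
      zero_div]

lemma tendsto_integral_putSpread (ν : Measure ℝ) [IsFiniteMeasure ν] (a : ℝ) :
    Tendsto (fun ε => ∫ x, putSpread a ε x ∂ν) (𝓝[>] 0) (𝓝 (ν.real (Iic a))) := by
  rw [← integral_indicator_one measurableSet_Iic]
  refine tendsto_integral_filter_of_dominated_convergence (fun _ => 1) ?_ ?_ (integrable_const 1)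
    (ae_of_all _ (tendsto_putSpread a))
  · exact .of_forall fun ε => by unfold putSpread; fun_prop
  · filter_upwards [self_mem_nhdsWithin] with ε hε
    exact ae_of_all _ (norm_putSpread_le_one hε a)

lemma measure_ext_of_put_integrals {ν ρ : Measure ℝ} [IsFiniteMeasure ν] [IsFiniteMeasure ρ]
    (hν : ∀ K, Integrable (fun x => max (K - x) 0) ν)
    (hρ : ∀ K, Integrable (fun x => max (K - x) 0) ρ)
    (h : ∀ K, ∫ x, max (K - x) 0 ∂ν = ∫ x, max (K - x) 0 ∂ρ) : ν = ρ := by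
  refine Measure.ext_of_Iic _ _ fun a => (measureReal_eq_measureReal_iff).1 ?_
  refine tendsto_nhds_unique (tendsto_integral_putSpread ν a) ?_
  refine (tendsto_integral_putSpread ρ a).congr fun ε => ?_
  simp only [putSpread, integral_div]
  rw [integral_sub (hν _) (hν _), integral_sub (hρ _) (hρ _), h, h]

end PutIntegrals

section Sublinear

variable {E : Type*} [AddCommGroup E] [Module ℝ E]

lemma exists_linearMap_le_of_sublinear {N : E → ℝ}
    (hsmul : ∀ c : ℝ, 0 < c → ∀ x, N (c • x) = c * N x)
    (hadd : ∀ x y, N (x + y) ≤ N x + N y) (x : E) :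
    ∃ L : E →ₗ[ℝ] ℝ, (∀ y, L y ≤ N y) ∧ L x = N x := by
  have zero : N 0 = 0 := by
    have := hsmul 2 two_pos 0
    rw [smul_zero] at this
    linarith
  have line_le : ∀ c : ℝ, c * N x ≤ N (c • x) := by
    intro c
    rcases lt_trichotomy c 0 with hc | rfl | hc
    · have := hadd (c • x) (-c • x)
      rw [hsmul (-c) (neg_pos.2 hc), ← add_smul, add_neg_cancel, zero_smul, zero] at this
      linarith
    · simp [zero]
    · rw [hsmul c hc]
  have line_wd : ∀ c : ℝ, c • x = 0 → c • N x = 0 := by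
    intro c hc
    rcases smul_eq_zero.1 hc with rfl | rfl
    · rw [zero_smul]
    · rw [zero, smul_zero]
  obtain ⟨L, hLx, hLN⟩ := exists_extension_of_le_sublinear
    (LinearPMap.mkSpanSingleton' x (N x) line_wd) N hsmul hadd (by
      rintro ⟨_, hy⟩
      obtain ⟨c, rfl⟩ := Submodule.mem_span_singleton.1 hy
      rw [LinearPMap.mkSpanSingleton'_apply]
      exact line_le c)
  exact ⟨L, hLN, (hLx ⟨x, Submodule.mem_span_singleton_self x⟩).trans
    (LinearPMap.mkSpanSingleton'_apply_self x (N x) line_wd _)⟩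

end Sublinear

section TightFunctionals

open BoundedContinuousFunction CompactlySupported

variable {X : Type*} [TopologicalSpace X]

lemma abs_map_mul_sub_le (L : (X →ᵇ ℝ) →ₚ[ℝ] ℝ) (f : X →ᵇ ℝ) {χ : X →ᵇ ℝ} (hχ : χ ≤ 1) :
    |L (f * χ) - L f| ≤ ‖f‖ * L (1 - χ) := by
  have pointwise : ∀ x, |f x * (1 - χ x)| ≤ ‖f‖ * (1 - χ x) := fun x => by
    have hx : 0 ≤ 1 - χ x := sub_nonneg.2 (hχ x)
    rw [abs_mul, abs_of_nonneg hx]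
    exact mul_le_mul_of_nonneg_right (f.norm_coe_le_norm x) hx
  have upper : f * (1 - χ) ≤ ‖f‖ • (1 - χ) := fun x => (abs_le.1 (pointwise x)).2
  have lower : -(‖f‖ • (1 - χ)) ≤ f * (1 - χ) := fun x => (abs_le.1 (pointwise x)).1
  have h₁ := OrderHomClass.mono L upper
  have h₂ := OrderHomClass.mono L lower
  rw [map_neg, map_smul, smul_eq_mul] at h₂
  rw [map_smul, smul_eq_mul] at h₁
  rw [abs_sub_comm, ← map_sub, ← mul_one_sub]
  exact abs_le.2 ⟨h₂, h₁⟩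

lemma eq_of_eqOn_hasCompactSupport {L M : (X →ᵇ ℝ) →ₚ[ℝ] ℝ}
    (hagree : ∀ f : X →ᵇ ℝ, HasCompactSupport f → M f = L f) (hone : M 1 ≤ L 1)
    (htight : ∀ ε > 0, ∃ χ : X →ᵇ ℝ, HasCompactSupport χ ∧ χ ≤ 1 ∧ L (1 - χ) ≤ ε)
    (f : X →ᵇ ℝ) : M f = L f := by
  refine sub_eq_zero.1 (abs_nonpos_iff.1 (ge_of_tendsto (x := 𝓝[>] (0 : ℝ))
    (f := fun ε => 2 * ‖f‖ * ε) ?_ ?_))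
  · exact (Continuous.tendsto' (by fun_prop) 0 0 (mul_zero _)).mono_left nhdsWithin_le_nhds
  filter_upwards [self_mem_nhdsWithin] with ε hε
  obtain ⟨χ, hχc, hχ1, hLε⟩ := htight ε hε
  have hMε : M (1 - χ) ≤ ε := by
    rw [map_sub] at hLε ⊢
    rw [hagree χ hχc]
    linarith
  have hL := (abs_map_mul_sub_le L f hχ1).trans (mul_le_mul_of_nonneg_left hLε (norm_nonneg f))
  have hM := (abs_map_mul_sub_le M f hχ1).trans (mul_le_mul_of_nonneg_left hMε (norm_nonneg f))
  rw [hagree (f * χ) hχc.mul_left, abs_sub_comm] at hM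
  calc |M f - L f|
      ≤ |M f - L (f * χ)| + |L (f * χ) - L f| := abs_sub_le _ _ _
    _ ≤ 2 * ‖f‖ * ε := by linarith

/-- The restriction of a positive linear functional on bounded continuous functions to the
compactly supported ones, to which the Riesz–Markov–Kakutani theorem applies. -/
def compactlySupportedRestriction (L : (X →ᵇ ℝ) →ₚ[ℝ] ℝ) : C_c(X, ℝ) →ₚ[ℝ] ℝ :=
  .mk₀
    { toFun := fun f => L f.toBoundedContinuousFunction
      map_add' := fun f g => map_add L f.toBoundedContinuousFunction g.toBoundedContinuousFunction
      map_smul' := fun c f => map_smul L c f.toBoundedContinuousFunction }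
    fun f hf => map_nonneg L (show 0 ≤ f.toBoundedContinuousFunction from hf)

variable [MeasurableSpace X] [BorelSpace X]

/-- Integration against a finite measure, as a positive linear functional on bounded continuous
functions. -/
def expectation (Q : Measure X) [IsFiniteMeasure Q] : (X →ᵇ ℝ) →ₚ[ℝ] ℝ :=
  .mk₀
    { toFun := fun f => ∫ x, f x ∂Q
      map_add' := fun f g => integral_add (f.integrable Q) (g.integrable Q)
      map_smul' := fun c f => integral_const_mul c f }
    fun _ hf => integral_nonneg hf

lemma expectation_apply (Q : Measure X) [IsFiniteMeasure Q] (f : X →ᵇ ℝ) :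
    expectation Q f = ∫ x, f x ∂Q := rfl

variable [T2Space X] [LocallyCompactSpace X]

lemma integral_rieszMeasure_compactlySupportedRestriction (L : (X →ᵇ ℝ) →ₚ[ℝ] ℝ) {f : X →ᵇ ℝ}
    (hf : HasCompactSupport f) :
    ∫ x, f x ∂(RealRMK.rieszMeasure (compactlySupportedRestriction L)) = L f :=
  RealRMK.integral_rieszMeasure (compactlySupportedRestriction L) ⟨f.toContinuousMap, hf⟩

lemma rieszMeasure_compactlySupportedRestriction_univ_le (L : (X →ᵇ ℝ) →ₚ[ℝ] ℝ) :
    RealRMK.rieszMeasure (compactlySupportedRestriction L) univ ≤ ENNReal.ofReal (L 1) := by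
  rw [isOpen_univ.measure_eq_iSup_isCompact]
  refine iSup₂_le fun K _ => iSup_le fun hK => ?_
  obtain ⟨f, hfK, -, hfc, hf01⟩ := exists_continuous_one_zero_of_isCompact hK isClosed_empty
    (disjoint_empty K)
  refine (RealRMK.rieszMeasure_le_of_eq_one _ (f := ⟨f, hfc⟩) (fun x => (hf01 x).1) hK hfK).trans
    (ENNReal.ofReal_le_ofReal ?_)
  exact OrderHomClass.mono L fun x => (hf01 x).2

lemma exists_isFiniteMeasure_integral_eq (L : (X →ᵇ ℝ) →ₚ[ℝ] ℝ)
    (htight : ∀ ε > 0, ∃ χ : X →ᵇ ℝ, HasCompactSupport χ ∧ χ ≤ 1 ∧ L (1 - χ) ≤ ε) :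
    ∃ Q : Measure X, IsFiniteMeasure Q ∧ ∀ f : X →ᵇ ℝ, ∫ x, f x ∂Q = L f := by
  let Q := RealRMK.rieszMeasure (compactlySupportedRestriction L)
  have hQ : Q univ ≤ ENNReal.ofReal (L 1) := rieszMeasure_compactlySupportedRestriction_univ_le L
  have : IsFiniteMeasure Q := ⟨hQ.trans_lt ENNReal.ofReal_lt_top⟩
  refine ⟨Q, this, eq_of_eqOn_hasCompactSupport (M := expectation Q) (fun f hf => ?_) ?_ htight⟩
  · exact integral_rieszMeasure_compactlySupportedRestriction L hf
  · have one_nonneg : 0 ≤ L 1 := map_nonneg L (show (0 : X →ᵇ ℝ) ≤ 1 from fun _ => zero_le_one)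
    have mass : expectation Q 1 = Q.real univ := by
      simp [expectation_apply]
    rw [mass]
    exact ENNReal.toReal_le_of_le_ofReal one_nonneg hQ

end TightFunctionals

section Strategies

variable {n : ℕ}

namespace Dyn

instance : Add (Dyn n) where
  add D E :=
    { pos := D.pos + E.pos
      meas := fun j => (D.meas j).add (E.meas j)
      bdd := fun j => by
        obtain ⟨C, hC⟩ := D.bdd j
        obtain ⟨C', hC'⟩ := E.bdd j
        exact ⟨C + C', fun x => (abs_add_le _ _).trans (add_le_add (hC x) (hC' x))⟩ }

instance : SMul ℝ (Dyn n) where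
  smul a D :=
    { pos := a • D.pos
      meas := fun j => (D.meas j).const_mul a
      bdd := fun j => by
        obtain ⟨C, hC⟩ := D.bdd j
        exact ⟨|a| * C, fun x => (abs_mul _ _).trans_le
          (mul_le_mul_of_nonneg_left (hC x) (abs_nonneg a))⟩ }

/-- The strategy holding `b j` units of the asset between the dates `j` and `j + 1`, whatever the
past. -/
def const (b : Fin n → ℝ) : Dyn n where
  pos j _ := b j
  meas _ := measurable_const
  bdd j := ⟨|b j|, fun _ => le_rfl⟩

/-- The strategy that trades, according to `φ`, only between the dates `j` and `j + 1`. -/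
def single (j : Fin n) (φ : (Fin j → ℝ) → ℝ) (hφ : Measurable φ) (hb : ∃ C, ∀ s, |φ s| ≤ C) :
    Dyn n where
  pos := Pi.single j φ
  meas i := by
    rcases eq_or_ne i j with rfl | hij
    · rwa [Pi.single_eq_same]
    · rw [Pi.single_eq_of_ne hij]
      exact measurable_const
  bdd i := by
    rcases eq_or_ne i j with rfl | hij
    · rwa [Pi.single_eq_same]
    · rw [Pi.single_eq_of_ne hij]
      exact ⟨0, fun _ => abs_zero.le⟩

/-- The strategy holding the positive parts of the positions of `D`. -/
def posPart (D : Dyn n) : Dyn n where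
  pos j s := max (D.pos j s) 0
  meas j := (D.meas j).max measurable_const
  bdd j := (D.bdd j).imp fun C hC s => by
    rw [abs_of_nonneg (le_max_right _ _)]
    exact (max_le (le_abs_self _) (abs_nonneg _)).trans (hC s)

lemma Nonneg.add {D E : Dyn n} (hD : D.Nonneg) (hE : E.Nonneg) : (D + E).Nonneg :=
  fun j s => add_nonneg (hD j s) (hE j s)

lemma Nonneg.smul {a : ℝ} (ha : 0 ≤ a) {D : Dyn n} (hD : D.Nonneg) : (a • D).Nonneg :=
  fun j s => mul_nonneg ha (hD j s)

lemma Nonneg.single {j : Fin n} {φ : (Fin j → ℝ) → ℝ} (hφ : Measurable φ)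
    (hb : ∃ C, ∀ s, |φ s| ≤ C) (h : 0 ≤ φ) : (single j φ hφ hb).Nonneg :=
  fun i s => (Pi.single_nonneg.2 h : 0 ≤ (Dyn.single j φ hφ hb).pos) i s

lemma nonneg_posPart (D : Dyn n) : D.posPart.Nonneg :=
  fun _ _ => le_max_right _ _

lemma gains_posPart {D : Dyn n} {ω : Path n} (h : ∀ j, 0 ≤ D.pos j (restr j ω)) :
    D.posPart.gains ω = D.gains ω :=
  Finset.sum_congr rfl fun j _ => congrArg (· * _) (max_eq_left (h j))

lemma gains_add (D E : Dyn n) (ω : Path n) : (D + E).gains ω = D.gains ω + E.gains ω := by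
  simp only [gains, ← Finset.sum_add_distrib, ← add_mul]
  rfl

lemma gains_smul (a : ℝ) (D : Dyn n) (ω : Path n) : (a • D).gains ω = a * D.gains ω := by
  simp only [gains, Finset.mul_sum, ← mul_assoc]
  rfl

lemma gains_single {j : Fin n} {φ : (Fin j → ℝ) → ℝ} (hφ : Measurable φ)
    (hb : ∃ C, ∀ s, |φ s| ≤ C) (ω : Path n) :
    (single j φ hφ hb).gains ω = φ (restr j ω) * (ω j.succ - ω j.castSucc) := by
  rw [gains, Finset.sum_eq_single j]
  · simp only [single, Pi.single_eq_same]
  · intro i _ hij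
    simp only [single, Pi.single_eq_of_ne hij, Pi.zero_apply, zero_mul]
  · exact fun hj => absurd (Finset.mem_univ j) hj

end Dyn

namespace Static

lemma putPayoff_eq_price (X : Static n) (ω : Path n) :
    X.putPayoff ω = X.price fun i K => max (K - ω i.succ) 0 := rfl

instance : Add (Static n) where
  add X Y :=
    { const := X.const + Y.const
      m := X.m + Y.m
      coeff := Fin.append X.coeff Y.coeff
      idx := Fin.append X.idx Y.idx
      strike := Fin.append X.strike Y.strike
      strike_nonneg := Fin.addCases
        (fun k => by simpa only [Fin.append_left] using X.strike_nonneg k)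
        (fun k => by simpa only [Fin.append_right] using Y.strike_nonneg k) }

instance : SMul ℝ (Static n) where
  smul a X := { X with const := a * X.const, coeff := a • X.coeff }

/-- The portfolio consisting of the amount `a` in cash. -/
def cash (a : ℝ) : Static n where
  const := a
  m := 0
  coeff := Fin.elim0
  idx := Fin.elim0
  strike := Fin.elim0
  strike_nonneg k := k.elim0

/-- The portfolio consisting of `a` options of maturity index `i` and strike `K`. -/
def option (a : ℝ) (i : Fin n) {K : ℝ} (hK : 0 ≤ K) : Static n where
  const := 0
  m := 1
  coeff _ := a
  idx _ := i
  strike _ := K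
  strike_nonneg _ := hK

variable (c : Fin n → ℝ → ℝ)

lemma price_add (X Y : Static n) : (X + Y).price c = X.price c + Y.price c := by
  have split := Fin.sum_univ_add fun k => Fin.append X.coeff Y.coeff k *
    c (Fin.append X.idx Y.idx k) (Fin.append X.strike Y.strike k)
  simp only [Fin.append_left, Fin.append_right] at split
  change X.const + Y.const + _ = _
  rw [price, price, add_add_add_comm, ← split]
  rfl

lemma price_smul (a : ℝ) (X : Static n) : (a • X).price c = a * X.price c := by
  simp only [price, mul_add, Finset.mul_sum, ← mul_assoc]
  rfl

lemma price_cash (a : ℝ) : (cash a).price c = a :=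
  (congrArg (a + ·) (Fin.sum_univ_zero _)).trans (add_zero a)

lemma price_option (a : ℝ) (i : Fin n) {K : ℝ} (hK : 0 ≤ K) :
    (option a i hK).price c = a * c i K :=
  (congrArg (0 + ·) (Fin.sum_univ_one _)).trans (zero_add _)

end Static

end Strategies

section SuperhedgePrices

open BoundedContinuousFunction
open scoped Pointwise

variable {n : ℕ} {s₀ : ℝ} {c : Fin n → ℝ → ℝ} {f g : Path n → ℝ} {q r : ℝ}

/-- The costs of the put-based semi-static strategies without short selling that superhedge `f`
on `Ω`, when the puts are priced by `c`. -/
def superhedgePrices (s₀ : ℝ) (c : Fin n → ℝ → ℝ) (f : Path n → ℝ) : Set ℝ :=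
  {q | ∃ (X : Static n) (D : Dyn n), D.Nonneg ∧ X.price c = q ∧
    ∀ ω ∈ Omega n s₀, f ω ≤ X.putPayoff ω + D.gains ω}

/-- The real-valued counterpart of `V` for put-based strategies on `Ω`; it has the junk value `0`
if there is no superhedge, or if superhedges are arbitrarily cheap. -/
def superhedgingPrice (s₀ : ℝ) (c : Fin n → ℝ → ℝ) (f : Path n → ℝ) : ℝ :=
  sInf (superhedgePrices s₀ c f)

lemma V_eq_superhedgingPrice (hne : (superhedgePrices s₀ c f).Nonempty)
    (hbdd : BddBelow (superhedgePrices s₀ c f)) :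
    V Static.putPayoff c (Omega n s₀) (fun ω => (f ω : EReal)) = superhedgingPrice s₀ c f := by
  rw [superhedgingPrice, EReal.coe_strictMono.monotone.map_csInf_of_continuousAt
    continuous_coe_real_ereal.continuousAt hne hbdd]
  refine congrArg sInf (Set.ext fun q => ⟨?_, ?_⟩)
  · rintro ⟨X, D, hD, rfl, h⟩
    exact ⟨_, ⟨X, D, hD, rfl, fun ω hω => EReal.coe_le_coe_iff.1 (h ω hω)⟩, rfl⟩
  · rintro ⟨_, ⟨X, D, hD, rfl, h⟩, rfl⟩
    exact ⟨X, D, hD, rfl, fun ω hω => EReal.coe_le_coe_iff.2 (h ω hω)⟩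

lemma superhedgePrices_antitone (h : ∀ ω ∈ Omega n s₀, f ω ≤ g ω) :
    superhedgePrices s₀ c g ⊆ superhedgePrices s₀ c f := by
  rintro _ ⟨X, D, hD, rfl, hg⟩
  exact ⟨X, D, hD, rfl, fun ω hω => (h ω hω).trans (hg ω hω)⟩

lemma superhedgePrices_congr (h : ∀ ω ∈ Omega n s₀, f ω = g ω) :
    superhedgePrices s₀ c f = superhedgePrices s₀ c g :=
  (superhedgePrices_antitone fun ω hω => (h ω hω).ge).antisymm
    (superhedgePrices_antitone fun ω hω => (h ω hω).le)

lemma superhedgePrices_add_subset :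
    superhedgePrices s₀ c f + superhedgePrices s₀ c g ⊆ superhedgePrices s₀ c (f + g) := by
  rintro _ ⟨_, ⟨X, D, hD, rfl, hf⟩, _, ⟨Y, E, hE, rfl, hg⟩, rfl⟩
  refine ⟨X + Y, D + E, hD.add hE, X.price_add c Y, fun ω hω => ?_⟩
  rw [Static.putPayoff_eq_price, Static.price_add, Dyn.gains_add, Pi.add_apply,
    add_add_add_comm]
  exact add_le_add (hf ω hω) (hg ω hω)

lemma smul_superhedgePrices_subset {a : ℝ} (ha : 0 ≤ a) :
    a • superhedgePrices s₀ c f ⊆ superhedgePrices s₀ c (a • f) := by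
  rintro _ ⟨_, ⟨X, D, hD, rfl, hf⟩, rfl⟩
  refine ⟨a • X, a • D, hD.smul ha, X.price_smul c a, fun ω hω => ?_⟩
  rw [Static.putPayoff_eq_price, Static.price_smul, Dyn.gains_smul, ← mul_add]
  exact mul_le_mul_of_nonneg_left (hf ω hω) ha

lemma gains_mem_superhedgePrices {D : Dyn n} (hD : D.Nonneg) : 0 ∈ superhedgePrices s₀ c D.gains :=
  ⟨.cash 0, D, hD, Static.price_cash c 0, fun ω _ => by
    rw [Static.putPayoff_eq_price, Static.price_cash, zero_add]⟩

lemma price_mem_superhedgePrices (X : Static n)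
    (h : ∀ ω ∈ Omega n s₀, f ω ≤ X.putPayoff ω) : X.price c ∈ superhedgePrices s₀ c f := by
  refine ⟨X, .const 0, fun _ _ => le_rfl, rfl, fun ω hω => (h ω hω).trans_eq ?_⟩
  simp only [Dyn.gains, Dyn.const, Pi.zero_apply, zero_mul, Finset.sum_const_zero, add_zero]

lemma const_mem_superhedgePrices {a : ℝ} (h : ∀ ω ∈ Omega n s₀, f ω ≤ a) :
    a ∈ superhedgePrices s₀ c f := by
  rw [← Static.price_cash c a]
  refine price_mem_superhedgePrices _ fun ω hω => ?_
  rw [Static.putPayoff_eq_price, Static.price_cash]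
  exact h ω hω

lemma put_mem_superhedgePrices (a : ℝ) (i : Fin n) {K : ℝ} (hK : 0 ≤ K) :
    a * c i K ∈ superhedgePrices s₀ c fun ω => a * max (K - ω i.succ) 0 := by
  rw [← Static.price_option c a i hK]
  refine price_mem_superhedgePrices _ fun ω _ => ?_
  rw [Static.putPayoff_eq_price, Static.price_option]

lemma sum_mem_superhedgePrices {ι : Type*} (t : Finset ι) {f : ι → Path n → ℝ} {q : ι → ℝ}
    (h : ∀ i ∈ t, q i ∈ superhedgePrices s₀ c (f i)) :
    ∑ i ∈ t, q i ∈ superhedgePrices s₀ c (∑ i ∈ t, f i) := by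
  induction t using Finset.cons_induction with
  | empty => exact const_mem_superhedgePrices fun _ _ => le_rfl
  | cons i t hi ih =>
    rw [Finset.sum_cons, Finset.sum_cons]
    exact superhedgePrices_add_subset (add_mem_add (h i (Finset.mem_cons_self i t))
      (ih fun j hj => h j (Finset.mem_cons_of_mem hj)))

end SuperhedgePrices

section Models

variable {n : ℕ} {s₀ : ℝ} {μ : Fin n → Measure ℝ} {Q : Measure (Path n)}

lemma continuous_restr (j : Fin n) : Continuous (restr (n := n) j) :=
  continuous_pi fun _ => continuous_apply _

lemma measurable_restr (j : Fin n) : Measurable (restr (n := n) j) :=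
  (continuous_restr j).measurable

lemma isClosed_Omega : IsClosed (Omega n s₀) :=
  (isClosed_eq (continuous_apply 0) continuous_const).inter
    (isClosed_Ici (a := (0 : Path n)))

/-- The put prices `p_i(K) = ∫ (K − x)⁺ μ_i(dx)`. -/
abbrev putPrice (μ : Fin n → Measure ℝ) : Fin n → ℝ → ℝ :=
  fun i K => ∫ x, max (K - x) 0 ∂(μ i)

lemma ae_mem_Omega (hQ : Q ∈ PiMu s₀ μ) : ∀ᵐ ω ∂Q, ω ∈ Omega n s₀ :=
  have := hQ.1
  (prob_compl_eq_zero_iff isClosed_Omega.measurableSet).2 hQ.2.1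

lemma initial_nonneg (hQ : Q ∈ PiMu s₀ μ) : 0 ≤ s₀ :=
  have := hQ.1
  let ⟨_, hω⟩ := (ae_mem_Omega hQ).exists
  hω.1 ▸ hω.2 0

lemma isProbabilityMeasure_marginal (hQ : Q ∈ PiMu s₀ μ) (i : Fin n) :
    IsProbabilityMeasure (μ i) :=
  have := hQ.1
  hQ.2.2 i ▸ Measure.isProbabilityMeasure_map (measurable_pi_apply i.succ).aemeasurable

lemma ae_nonneg_marginal (hQ : Q ∈ PiMu s₀ μ) (i : Fin n) : ∀ᵐ x ∂μ i, 0 ≤ x := by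
  rw [← hQ.2.2 i]
  exact (ae_map_iff (p := fun x : ℝ => 0 ≤ x) (measurable_pi_apply i.succ).aemeasurable
    (measurableSet_le measurable_const measurable_id)).2
      ((ae_mem_Omega hQ).mono fun ω hω => hω.2 i.succ)

lemma integrable_comp_coord_iff (hQ : Q ∈ PiMu s₀ μ) (i : Fin n) {g : ℝ → ℝ} (hg : Measurable g) :
    Integrable (fun ω : Path n => g (ω i.succ)) Q ↔ Integrable g (μ i) := by
  rw [← hQ.2.2 i]
  exact (integrable_map_measure hg.aestronglyMeasurable
    (measurable_pi_apply i.succ).aemeasurable).symm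

lemma integral_comp_coord (hQ : Q ∈ PiMu s₀ μ) (i : Fin n) {g : ℝ → ℝ} (hg : Measurable g) :
    ∫ ω, g (ω i.succ) ∂Q = ∫ x, g x ∂μ i := by
  rw [← hQ.2.2 i]
  exact (integral_map (measurable_pi_apply i.succ).aemeasurable hg.aestronglyMeasurable).symm

lemma integrable_coord (hQ : Q ∈ PiMu s₀ μ) (hmom : ∀ i, Integrable (fun x => x) (μ i))
    (i : Fin (n + 1)) : Integrable (fun ω : Path n => ω i) Q := by
  have := hQ.1
  induction i using Fin.cases with
  | zero => exact (integrable_const s₀).congr ((ae_mem_Omega hQ).mono fun ω hω => hω.1.symm)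
  | succ i => exact (integrable_comp_coord_iff hQ i measurable_id).2 (hmom i)

lemma integrable_put_coord (hQ : Q ∈ PiMu s₀ μ) (i : Fin n) (K : ℝ) :
    Integrable (fun ω : Path n => max (K - ω i.succ) 0) Q :=
  have := isProbabilityMeasure_marginal hQ i
  (integrable_comp_coord_iff hQ i (g := fun x => max (K - x) 0) (by fun_prop)).2
    (integrable_put (ae_nonneg_marginal hQ i) K)

lemma integrable_putPayoff (hQ : Q ∈ PiMu s₀ μ) (X : Static n) : Integrable X.putPayoff Q :=
  have := hQ.1
  (integrable_const _).add
    (integrable_finsetSum _ fun _ _ => (integrable_put_coord hQ _ _).const_mul _)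

lemma integral_putPayoff (hQ : Q ∈ PiMu s₀ μ) (X : Static n) :
    ∫ ω, X.putPayoff ω ∂Q = X.price (putPrice μ) := by
  have := hQ.1
  have hint : ∀ k, Integrable (fun ω : Path n =>
      X.coeff k * max (X.strike k - ω (X.idx k).succ) 0) Q := fun k =>
    (integrable_put_coord hQ _ _).const_mul _
  simp only [Static.putPayoff, Static.price]
  rw [integral_add (integrable_const _) (integrable_finsetSum _ fun k _ => hint k),
    integral_finsetSum _ fun _ _ => hint _, integral_const, probReal_univ, one_smul]
  congr! 2
  rw [integral_const_mul, integral_comp_coord hQ _ (g := fun x => max (X.strike _ - x) 0)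
    (by fun_prop)]

lemma isSupermartingaleLaw_iff (hint : ∀ i, Integrable (fun ω : Path n => ω i) Q) :
    IsSupermartingaleLaw Q ↔ ∀ j : Fin n,
      weightedLaw Q (restr j) (fun ω => ω j.succ - ω j.castSucc) ≤
        weightedLaw Q (restr j) (-fun ω => ω j.succ - ω j.castSucc) :=
  forall_congr' fun j =>
    (weightedLaw_le_iff_indicator (measurable_restr j) ((hint _).sub (hint _))).symm

lemma integrable_pos_mul_increment (D : Dyn n)
    (hint : ∀ i, Integrable (fun ω : Path n => ω i) Q) (j : Fin n) :
    Integrable (fun ω => D.pos j (restr j ω) * (ω j.succ - ω j.castSucc)) Q := by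
  obtain ⟨C, hC⟩ := D.bdd j
  exact ((hint _).sub (hint _)).bdd_mul (c := C)
    ((D.meas j).comp (measurable_restr j)).aestronglyMeasurable
    (Eventually.of_forall fun ω => hC _)

lemma integrable_gains (D : Dyn n) (hint : ∀ i, Integrable (fun ω : Path n => ω i) Q) :
    Integrable D.gains Q :=
  integrable_finsetSum _ fun j _ => integrable_pos_mul_increment D hint j

lemma integral_gains_nonpos {D : Dyn n} (hD : D.Nonneg)
    (hint : ∀ i, Integrable (fun ω : Path n => ω i) Q) (hQ : IsSupermartingaleLaw Q) :
    ∫ ω, D.gains ω ∂Q ≤ 0 := by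
  simp only [Dyn.gains]
  rw [integral_finsetSum _ fun j _ => integrable_pos_mul_increment D hint j]
  refine Finset.sum_nonpos fun j _ => ?_
  obtain ⟨C, hC⟩ := D.bdd j
  have h := (integral_comp_mul_nonpos_iff (measurable_restr j) ((hint j.succ).sub (hint j.castSucc))
    (D.meas j).real_toNNReal (C := C.toNNReal) fun s =>
      Real.toNNReal_le_toNNReal ((le_abs_self _).trans (hC s))).2
    (lintegral_mono' ((isSupermartingaleLaw_iff hint).1 hQ j) le_rfl)
  simpa only [Real.coe_toNNReal _ (hD j _), Pi.sub_apply] using h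

lemma integral_le_of_mem_superhedgePrices (hQ : Q ∈ MSet s₀ μ)
    (hmom : ∀ i, Integrable (fun x => x) (μ i)) {f : Path n → ℝ} (hf : Integrable f Q) {q : ℝ}
    (hq : q ∈ superhedgePrices s₀ (putPrice μ) f) : ∫ ω, f ω ∂Q ≤ q := by
  obtain ⟨X, D, hD, rfl, h⟩ := hq
  have hint := integrable_coord hQ.1 hmom
  have hX := integrable_putPayoff hQ.1 X
  have hDint := integrable_gains D hint
  calc ∫ ω, f ω ∂Q ≤ ∫ ω, (X.putPayoff ω + D.gains ω) ∂Q :=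
        integral_mono_ae hf (hX.add hDint) ((ae_mem_Omega hQ.1).mono h)
    _ = X.price (putPrice μ) + ∫ ω, D.gains ω ∂Q := by
        rw [integral_add hX hDint, integral_putPayoff hQ.1]
    _ ≤ X.price (putPrice μ) := add_le_of_nonpos_right (integral_gains_nonpos hD hint hQ.2)

end Models

section Representation

open BoundedContinuousFunction
open scoped Pointwise

lemma exists_boundedContinuous_eqOn_nonneg {ι : Type*} {f : (ι → ℝ) → ℝ} {C : ℝ}
    (hf : ContinuousOn f (Ici 0)) (hC : ∀ x, 0 ≤ x → |f x| ≤ C) :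
    ∃ F : (ι → ℝ) →ᵇ ℝ, EqOn F f (Ici 0) := by
  have hcont : Continuous fun x : ι → ℝ => f (x ⊔ 0) :=
    hf.comp_continuous (continuous_pi fun i => (continuous_apply i).max continuous_const)
      fun _ => mem_Ici.2 le_sup_right
  refine ⟨.ofNormedAddCommGroup _ hcont C fun x => hC _ le_sup_right, fun x hx => ?_⟩
  exact congrArg f (sup_eq_left.2 hx)

lemma exists_cutoff {E : Type*} [NormedAddCommGroup E] [ProperSpace E] {R : ℝ} (hR : 0 < R) :
    ∃ χ : E →ᵇ ℝ, HasCompactSupport χ ∧ χ ≤ 1 ∧ ∀ x, 1 - χ x = min (‖x‖ / R) 1 := by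
  have le_one : ∀ x : E, max (1 - ‖x‖ / R) 0 ≤ 1 := fun x =>
    max_le (sub_le_self _ (by positivity)) zero_le_one
  refine ⟨.ofNormedAddCommGroup (fun x => max (1 - ‖x‖ / R) 0) (by fun_prop) 1 fun x => ?_, ?_,
    le_one, fun x => ?_⟩
  · rw [Real.norm_of_nonneg (le_max_right _ _)]
    exact le_one x
  · refine .intro (isCompact_closedBall 0 R) fun x hx => max_eq_right ?_
    rw [mem_closedBall_zero_iff, not_le] at hx
    rw [sub_nonpos, one_le_div hR]
    exact hx.le
  · change 1 - max (1 - ‖x‖ / R) 0 = _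
    rw [← min_sub_sub_left, sub_sub_cancel, sub_zero]

variable {n : ℕ} {s₀ : ℝ} {μ : Fin n → Measure ℝ}

lemma sub_mean_le_put {ν : Measure ℝ} [IsProbabilityMeasure ν] (hν : ∀ᵐ x ∂ν, 0 ≤ x)
    (hmom : Integrable (fun x => x) ν) (K : ℝ) :
    K - ∫ x, x ∂ν ≤ ∫ x, max (K - x) 0 ∂ν :=
  calc K - ∫ x, x ∂ν = ∫ x, (K - x) ∂ν := by
        rw [integral_sub (integrable_const K) hmom, integral_const, probReal_univ, one_smul]
    _ ≤ ∫ x, max (K - x) 0 ∂ν :=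
        integral_mono ((integrable_const K).sub hmom) (integrable_put hν K) fun _ => le_max_left _ _

lemma min_norm_div_le_of_mem_Omega {R : ℝ} (hR : 0 < R) {ω : Path n} (hω : ω ∈ Omega n s₀) :
    min (‖ω‖ / R) 1 ≤ s₀ / R + ∑ i : Fin n, (1 + -R⁻¹ * max (R - ω i.succ) 0) := by
  set B := s₀ / R + ∑ i : Fin n, (1 + -R⁻¹ * max (R - ω i.succ) 0)
  have term_eq : ∀ x : ℝ, 1 + -R⁻¹ * max (R - x) 0 = min (x / R) 1 := fun x => by
    rw [neg_mul, ← sub_eq_add_neg, mul_max_of_nonneg _ _ (inv_nonneg.2 hR.le), mul_zero,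
      ← min_sub_sub_left, sub_zero, mul_sub, inv_mul_cancel₀ hR.ne', sub_sub_cancel, div_eq_inv_mul]
  have s₀_nonneg : 0 ≤ s₀ / R := div_nonneg (hω.1 ▸ hω.2 0) hR.le
  have term_nonneg : ∀ i ∈ Finset.univ, 0 ≤ 1 + -R⁻¹ * max (R - ω (Fin.succ i)) 0 := fun i _ => by
    rw [term_eq]
    exact le_min (div_nonneg (hω.2 _) hR.le) zero_le_one
  have B_nonneg : 0 ≤ B := add_nonneg s₀_nonneg (Finset.sum_nonneg term_nonneg)
  rcases le_or_gt 1 B with h1 | h1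
  · exact (min_le_right _ _).trans h1
  refine (min_le_left _ _).trans ((div_le_iff₀ hR).2
    ((pi_norm_le_iff_of_nonneg (mul_nonneg B_nonneg hR.le)).2 fun i => ?_))
  rw [Real.norm_of_nonneg (hω.2 i), ← div_le_iff₀ hR]
  induction i using Fin.cases with
  | zero =>
    rw [hω.1]
    exact le_add_of_nonneg_right (Finset.sum_nonneg term_nonneg)
  | succ i =>
    have hi : min (ω i.succ / R) 1 ≤ B := by
      rw [← term_eq]
      exact (Finset.single_le_sum term_nonneg (Finset.mem_univ i)).trans
        (le_add_of_nonneg_left s₀_nonneg)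
    exact (min_le_iff.1 hi).resolve_right h1.not_ge

lemma exists_cutoff_superhedgePrice_le [∀ i, IsProbabilityMeasure (μ i)]
    (hμ : ∀ i, ∀ᵐ x ∂μ i, 0 ≤ x) (hmom : ∀ i, Integrable (fun x => x) (μ i)) {ε : ℝ} (hε : 0 < ε) :
    ∃ χ : Path n →ᵇ ℝ, HasCompactSupport χ ∧ χ ≤ 1 ∧
      ∃ q ≤ ε, q ∈ superhedgePrices s₀ (putPrice μ) ⇑(1 - χ) := by
  set m := s₀ + ∑ i, ∫ x, x ∂μ i with hm
  set R := max 1 (m / ε)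
  have hR : 0 < R := zero_lt_one.trans_le (le_max_left _ _)
  obtain ⟨χ, hχc, hχ1, hχ⟩ := exists_cutoff (E := Path n) hR
  refine ⟨χ, hχc, hχ1, s₀ / R + ∑ i, (1 + -R⁻¹ * putPrice μ i R), ?_, ?_⟩
  · have term_le : ∀ i, 1 + -R⁻¹ * putPrice μ i R ≤ (∫ x, x ∂μ i) / R := fun i => by
      have h := mul_le_mul_of_nonneg_left (sub_mean_le_put (hμ i) (hmom i) R) (inv_nonneg.2 hR.le)
      rw [mul_sub, inv_mul_cancel₀ hR.ne', ← div_eq_inv_mul] at h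
      linarith
    calc s₀ / R + ∑ i, (1 + -R⁻¹ * putPrice μ i R) ≤ m / R := by
          rw [hm, add_div, Finset.sum_div]
          exact add_le_add_right (Finset.sum_le_sum fun i _ => term_le i) _
      _ ≤ ε := (div_le_comm₀ hR hε).2 (le_max_right _ _)
  · refine superhedgePrices_antitone (g := (fun _ => s₀ / R) +
      ∑ i : Fin n, ((fun _ => 1) + fun ω : Path n => -R⁻¹ * max (R - ω i.succ) 0)) ?_ ?_
    · intro ω hω
      simp only [BoundedContinuousFunction.sub_apply, BoundedContinuousFunction.coe_one,
        Pi.one_apply, hχ, Pi.add_apply, Finset.sum_apply]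
      exact min_norm_div_le_of_mem_Omega hR hω
    · exact superhedgePrices_add_subset (add_mem_add (const_mem_superhedgePrices fun _ _ => le_rfl)
        (sum_mem_superhedgePrices _ fun i _ => superhedgePrices_add_subset (add_mem_add
          (const_mem_superhedgePrices fun _ _ => le_rfl) (put_mem_superhedgePrices _ i hR.le))))

/-- The value of the asset at the end of the history `s`, started from `s₀`. -/
def lastValue {m : ℕ} (s₀ : ℝ) (s : Fin m → ℝ) : ℝ := (Fin.cons s₀ s : Fin (m + 1) → ℝ) (Fin.last m)

lemma measurable_lastValue {m : ℕ} : Measurable (lastValue (m := m) s₀) := by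
  unfold lastValue
  induction Fin.last m using Fin.cases with
  | zero => exact measurable_const
  | succ i => exact measurable_pi_apply i

lemma lastValue_restr {ω : Path n} (hω : ω 0 = s₀) (j : Fin n) :
    lastValue s₀ (restr j ω) = ω j.castSucc := by
  obtain ⟨_ | m, hm⟩ := j
  · exact hω.symm
  · rfl

lemma truncated_increment_mem_superhedgePrices (c : Fin n → ℝ → ℝ) (j : Fin n)
    {φ : (Fin j → ℝ) →ᵇ ℝ≥0} (hφ : ∀ s, φ s ≤ 1) (R : ℝ) :
    0 ∈ superhedgePrices s₀ c fun ω : Path n =>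
      φ (restr j ω) * (min (ω j.succ) R - min (ω j.castSucc) R) := by
  let position : (Fin j → ℝ) → ℝ := {s | lastValue s₀ s ≤ R}.indicator fun s => φ s
  have position_meas : Measurable position :=
    φ.continuous.measurable.coe_nnreal_real.indicator
      (measurableSet_le measurable_lastValue measurable_const)
  have position_nonneg : 0 ≤ position := indicator_nonneg fun s _ => (φ s).coe_nonneg
  have position_bdd : ∃ C, ∀ s, |position s| ≤ C := ⟨1, fun s => by
    rw [abs_of_nonneg (position_nonneg s)]
    exact indicator_le_self' (fun _ _ => (φ s).coe_nonneg) _ |>.trans (mod_cast hφ s)⟩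
  refine superhedgePrices_antitone (fun ω hω => ?_)
    (gains_mem_superhedgePrices (Dyn.Nonneg.single position_meas position_bdd position_nonneg))
  rw [Dyn.gains_single]
  by_cases h : ω j.castSucc ≤ R
  · have hpos : position (restr j ω) = φ (restr j ω) :=
      indicator_of_mem (s := {s | lastValue s₀ s ≤ R}) ((lastValue_restr hω.1 j).trans_le h) _
    rw [hpos, min_eq_left h]
    exact mul_le_mul_of_nonneg_left (sub_le_sub_right (min_le_left _ _) _) (φ _).coe_nonneg
  · have hpos : position (restr j ω) = 0 :=
      indicator_of_notMem (s := {s | lastValue s₀ s ≤ R})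
        (fun h' => h ((lastValue_restr hω.1 j).ge.trans h')) _
    rw [hpos, zero_mul, min_eq_right (not_le.1 h).le]
    exact mul_nonpos_of_nonneg_of_nonpos (φ _).coe_nonneg (sub_nonpos.2 (min_le_right _ _))

/-- The model `Q` prices bounded continuous claims below all their superhedging costs: this is what
survives, for a measure, of the domination of a linear functional by the superhedging price. -/
def DominatedBySuperhedging (s₀ : ℝ) (c : Fin n → ℝ → ℝ) (Q : Measure (Path n)) : Prop :=
  ∀ (f : Path n →ᵇ ℝ), ∀ q ∈ superhedgePrices s₀ c f, ∫ ω, f ω ∂Q ≤ q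

namespace DominatedBySuperhedging

variable {c : Fin n → ℝ → ℝ} {Q : Measure (Path n)} [IsProbabilityMeasure Q]

lemma ae_mem_Omega (hQ : DominatedBySuperhedging s₀ c Q) : ∀ᵐ ω ∂Q, ω ∈ Omega n s₀ :=
  ae_mem_of_forall_integral_le isClosed_Omega fun f a hf => hQ f a (const_mem_superhedgePrices hf)

lemma integral_le (hQ : DominatedBySuperhedging s₀ c Q) {f : Path n → ℝ} {C : ℝ}
    (hf : ContinuousOn f (Ici 0)) (hC : ∀ ω, 0 ≤ ω → |f ω| ≤ C) {q : ℝ}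
    (hq : q ∈ superhedgePrices s₀ c f) : ∫ ω, f ω ∂Q ≤ q := by
  obtain ⟨F, hF⟩ := exists_boundedContinuous_eqOn_nonneg hf hC
  rw [← integral_congr_ae (hQ.ae_mem_Omega.mono fun ω hω => hF hω.2)]
  exact hQ F q (superhedgePrices_antitone (fun ω hω => (hF hω.2).le) hq)

lemma integral_put (hQ : DominatedBySuperhedging s₀ c Q) (i : Fin n) {K : ℝ} (hK : 0 ≤ K) :
    ∫ ω, max (K - ω i.succ) 0 ∂Q = c i K := by
  have le_of_scaled : ∀ a : ℝ, ∫ ω, a * max (K - ω i.succ) 0 ∂Q ≤ a * c i K := fun a => by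
    refine hQ.integral_le (C := |a| * K) (by fun_prop) (fun ω hω => ?_)
      (put_mem_superhedgePrices a i hK)
    rw [abs_mul, abs_of_nonneg (le_max_right (K - ω i.succ) 0)]
    exact mul_le_mul_of_nonneg_left (max_le (sub_le_self K (hω i.succ)) hK) (abs_nonneg a)
  have hlong := le_of_scaled 1
  have hshort := le_of_scaled (-1)
  rw [integral_const_mul] at hlong hshort
  linarith

lemma map_coord [∀ i, IsFiniteMeasure (μ i)] (hQ : DominatedBySuperhedging s₀ (putPrice μ) Q)
    (hμ : ∀ i, ∀ᵐ x ∂μ i, 0 ≤ x) (i : Fin n) : Q.map (fun ω => ω i.succ) = μ i := by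
  have hmeas : AEMeasurable (fun ω : Path n => ω i.succ) Q :=
    (measurable_pi_apply i.succ).aemeasurable
  have hν : ∀ᵐ x ∂Q.map (fun ω => ω i.succ), 0 ≤ x :=
    (ae_map_iff (p := fun x : ℝ => 0 ≤ x) hmeas (measurableSet_le measurable_const measurable_id)).2
      (hQ.ae_mem_Omega.mono fun ω hω => hω.2 i.succ)
  refine measure_ext_of_put_integrals (integrable_put hν) (integrable_put (hμ i)) fun K => ?_
  rcases le_total 0 K with hK | hK
  · rw [integral_map hmeas (by fun_prop)]
    exact hQ.integral_put i hK
  · have put_eq_zero : ∀ ν : Measure ℝ, (∀ᵐ x ∂ν, 0 ≤ x) → ∫ x, max (K - x) 0 ∂ν = 0 :=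
      fun ν hν => integral_eq_zero_of_ae (hν.mono fun x hx =>
        max_eq_right (sub_nonpos.2 (hK.trans hx)))
    rw [put_eq_zero _ hν, put_eq_zero _ (hμ i)]

lemma integral_truncated_increment_nonpos (hQ : DominatedBySuperhedging s₀ c Q) (j : Fin n)
    {φ : (Fin j → ℝ) →ᵇ ℝ≥0} (hφ : ∀ s, φ s ≤ 1) {R : ℝ} (hR : 0 ≤ R) :
    ∫ ω, φ (restr j ω) * (min (ω j.succ) R - min (ω j.castSucc) R) ∂Q ≤ 0 := by
  have := continuous_restr j
  refine hQ.integral_le (C := R) (by fun_prop) (fun ω hω => ?_)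
    (truncated_increment_mem_superhedgePrices c j hφ R)
  have hsucc := le_min (hω j.succ) hR
  have hcast := le_min (hω j.castSucc) hR
  rw [abs_mul, NNReal.abs_eq]
  refine (mul_le_of_le_one_left (abs_nonneg _) (mod_cast hφ _)).trans (abs_sub_le_iff.2 ⟨?_, ?_⟩)
  · exact (sub_le_self _ hcast).trans (min_le_right _ _)
  · exact (sub_le_self _ hsucc).trans (min_le_right _ _)

lemma isSupermartingaleLaw (hQ : DominatedBySuperhedging s₀ c Q)
    (hint : ∀ i, Integrable (fun ω : Path n => ω i) Q) : IsSupermartingaleLaw Q := by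
  refine (isSupermartingaleLaw_iff hint).2 fun j => weightedLaw_le_of_continuous
    (measurable_restr j) ((hint _).sub (hint _)) fun φ hφ => ?_
  have hφr : Continuous fun ω : Path n => (φ (restr j ω) : ℝ) :=
    NNReal.continuous_coe.comp (φ.continuous.comp (continuous_restr j))
  refine le_of_tendsto' (x := atTop) (f := fun k : ℕ =>
    ∫ ω, φ (restr j ω) * (min (ω j.succ) k - min (ω j.castSucc) k) ∂Q) ?_
    fun k => hQ.integral_truncated_increment_nonpos j hφ k.cast_nonneg
  refine tendsto_integral_of_dominated_convergence (fun ω => |ω j.succ - ω j.castSucc|)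
    (fun k => Continuous.aestronglyMeasurable (by fun_prop)) ((hint _).sub (hint _)).abs
    (fun k => ae_of_all _ fun ω => ?_) (ae_of_all _ fun ω => ?_)
  · rw [Real.norm_eq_abs, abs_mul, NNReal.abs_eq]
    exact (mul_le_of_le_one_left (abs_nonneg _) (mod_cast hφ _)).trans
      (abs_inf_sub_inf_le_abs _ _ _)
  · have tendsto_min : ∀ x : ℝ, Tendsto (fun k : ℕ => min x k) atTop (𝓝 x) := fun x =>
      tendsto_const_nhds.congr' ((eventually_ge_atTop ⌈x⌉₊).mono fun k hk =>
        (min_eq_left (Nat.ceil_le.1 hk)).symm)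
    exact ((tendsto_min _).sub (tendsto_min _)).const_mul _

lemma mem_MSet [∀ i, IsFiniteMeasure (μ i)] (hQ : DominatedBySuperhedging s₀ (putPrice μ) Q)
    (hμ : ∀ i, ∀ᵐ x ∂μ i, 0 ≤ x) (hmom : ∀ i, Integrable (fun x => x) (μ i)) : Q ∈ MSet s₀ μ := by
  have hPi : Q ∈ PiMu s₀ μ := ⟨inferInstance,
    (prob_compl_eq_zero_iff isClosed_Omega.measurableSet).1 hQ.ae_mem_Omega, hQ.map_coord hμ⟩
  exact ⟨hPi, hQ.isSupermartingaleLaw (integrable_coord hPi hmom)⟩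

end DominatedBySuperhedging

lemma exists_mem_MSet_integral_eq [∀ i, IsProbabilityMeasure (μ i)]
    (hμ : ∀ i, ∀ᵐ x ∂μ i, 0 ≤ x) (hmom : ∀ i, Integrable (fun x => x) (μ i))
    {L : (Path n →ᵇ ℝ) →ₗ[ℝ] ℝ}
    (hL : ∀ f : Path n →ᵇ ℝ, ∀ q ∈ superhedgePrices s₀ (putPrice μ) f, L f ≤ q) :
    ∃ Q ∈ MSet s₀ μ, ∀ f : Path n →ᵇ ℝ, ∫ ω, f ω ∂Q = L f := by
  have le_of_le : ∀ (f : Path n →ᵇ ℝ) (a : ℝ), (∀ ω, f ω ≤ a) → L f ≤ a := fun f a hf =>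
    hL f a (const_mem_superhedgePrices fun ω _ => hf ω)
  have nonneg : ∀ f : Path n →ᵇ ℝ, 0 ≤ f → 0 ≤ L f := fun f hf => by
    rw [← neg_nonpos, ← map_neg]
    exact le_of_le (-f) 0 fun ω => neg_nonpos.2 (hf ω)
  obtain ⟨Q, _, hQ⟩ := exists_isFiniteMeasure_integral_eq (PositiveLinearMap.mk₀ L nonneg)
    fun ε hε => by
      obtain ⟨χ, hχc, hχ1, q, hqε, hq⟩ := exists_cutoff_superhedgePrice_le hμ hmom hε
      exact ⟨χ, hχc, hχ1, (hL _ q hq).trans hqε⟩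
  have one : ∫ ω, (1 : Path n →ᵇ ℝ) ω ∂Q = 1 := by
    have := le_of_le (-1) (-1) fun ω => le_rfl
    rw [map_neg, neg_le_neg_iff] at this
    exact (hQ 1).trans (le_antisymm (le_of_le 1 1 fun ω => le_rfl) this)
  have : IsProbabilityMeasure Q := by
    rw [isProbabilityMeasure_iff_real]
    simpa using one
  have hdom : DominatedBySuperhedging s₀ (putPrice μ) Q := fun f q hq =>
    (hQ f).trans_le (hL f q hq)
  exact ⟨Q, hdom.mem_MSet hμ hmom, hQ⟩

end Representation

section BoundedDuality

open BoundedContinuousFunction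
open scoped Pointwise

variable {n : ℕ} {s₀ : ℝ} {μ : Fin n → Measure ℝ}

lemma bddBelow_superhedgePrices (hmom : ∀ i, Integrable (fun x => x) (μ i))
    (hne : (MSet s₀ μ).Nonempty) {f : Path n → ℝ} (hf : ∀ Q ∈ MSet s₀ μ, Integrable f Q) :
    BddBelow (superhedgePrices s₀ (putPrice μ) f) := by
  obtain ⟨Q, hQ⟩ := hne
  exact ⟨_, fun _ => integral_le_of_mem_superhedgePrices hQ hmom (hf Q hQ)⟩

lemma nonempty_superhedgePrices (c : Fin n → ℝ → ℝ) (f : Path n →ᵇ ℝ) :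
    (superhedgePrices s₀ c f).Nonempty :=
  ⟨‖f‖, const_mem_superhedgePrices fun ω _ => (le_abs_self _).trans (f.norm_coe_le_norm ω)⟩

theorem isGreatest_superhedgingPrice (hmom : ∀ i, Integrable (fun x => x) (μ i))
    (hne : (MSet s₀ μ).Nonempty) (f : Path n →ᵇ ℝ) :
    IsGreatest ((fun Q => ∫ ω, f ω ∂Q) '' MSet s₀ μ) (superhedgingPrice s₀ (putPrice μ) f) := by
  set N : (Path n →ᵇ ℝ) → ℝ := fun f => superhedgingPrice s₀ (putPrice μ) f
  have bdd : ∀ f : Path n →ᵇ ℝ, BddBelow (superhedgePrices s₀ (putPrice μ) f) := fun f =>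
    bddBelow_superhedgePrices hmom hne fun Q hQ =>
      have := hQ.1.1
      f.integrable Q
  have N_add : ∀ f g, N (f + g) ≤ N f + N g := fun f g => by
    have := csInf_le_csInf (bdd (f + g))
      ((nonempty_superhedgePrices _ f).add (nonempty_superhedgePrices _ g))
      superhedgePrices_add_subset
    rwa [csInf_add (nonempty_superhedgePrices _ f) (bdd f) (nonempty_superhedgePrices _ g)
      (bdd g)] at this
  have N_smul_le : ∀ a : ℝ, 0 < a → ∀ f, N (a • f) ≤ a * N f := fun a ha f => by
    have := csInf_le_csInf (bdd (a • f)) (nonempty_superhedgePrices _ f).smul_set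
      (smul_superhedgePrices_subset ha.le)
    rwa [Real.sInf_smul_of_nonneg ha.le] at this
  have N_smul : ∀ a : ℝ, 0 < a → ∀ f, N (a • f) = a * N f := fun a ha f => by
    refine (N_smul_le a ha f).antisymm ?_
    have := N_smul_le a⁻¹ (inv_pos.2 ha) (a • f)
    rwa [inv_smul_smul₀ ha.ne', ← div_eq_inv_mul, le_div_iff₀' ha] at this
  obtain ⟨L, hLN, hLf⟩ := exists_linearMap_le_of_sublinear N_smul N_add f
  obtain ⟨Q₀, hQ₀⟩ := hne
  have := fun i => isProbabilityMeasure_marginal hQ₀.1 i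
  obtain ⟨Q, hQ, hQL⟩ := exists_mem_MSet_integral_eq (fun i => ae_nonneg_marginal hQ₀.1 i) hmom
    fun g q hq => (hLN g).trans (csInf_le (bdd g) hq)
  refine ⟨⟨Q, hQ, (hQL f).trans hLf⟩, ?_⟩
  rintro _ ⟨Q, hQ, rfl⟩
  have := hQ.1.1
  exact le_csInf (nonempty_superhedgePrices _ f) fun q hq =>
    integral_le_of_mem_superhedgePrices hQ hmom (f.integrable Q) hq

end BoundedDuality

section NoShortSelling

open scoped Pointwise

variable {n : ℕ} {s₀ : ℝ} {c : Fin n → ℝ → ℝ}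

lemma nonneg_of_forall_le_add_mul_sub {a b y C : ℝ} (h : ∀ x, 0 ≤ x → C ≤ a + b * (x - y)) :
    0 ≤ b := by
  by_contra! hb
  have hlim : Tendsto (fun x => a + b * (x - y)) atTop atBot :=
    tendsto_atBot_add_const_left _ _ ((tendsto_atTop_add_const_right _ (-y)
      tendsto_id).const_mul_atTop_of_neg hb)
  obtain ⟨x, hxC, hx⟩ := ((hlim.eventually_lt_atBot C).and (eventually_ge_atTop 0)).exists
  exact (h x hx).not_gt hxC

lemma exists_putPayoff_le (X : Static n) : ∃ A, ∀ ω ∈ Omega n s₀, X.putPayoff ω ≤ A := by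
  refine ⟨X.const + ∑ k, |X.coeff k| * X.strike k, fun ω hω => ?_⟩
  refine add_le_add_right (Finset.sum_le_sum fun k _ => ?_) _
  have put_le : max (X.strike k - ω (X.idx k).succ) 0 ≤ X.strike k :=
    max_le (sub_le_self _ (hω.2 _)) (X.strike_nonneg k)
  exact mul_le_mul (le_abs_self _) put_le (le_max_right _ _) (abs_nonneg _)

/-- The path that follows `ω` up to the date `i`, then jumps to `x` and stays there: along it, a
strategy is exposed to `x` through its position at the date `i` only. -/
def jumpAndFreeze (ω : Path n) (i : Fin n) (x : ℝ) : Path n :=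
  fun k => if k ≤ i.castSucc then ω k else x

lemma jumpAndFreeze_mem_Omega {ω : Path n} (hω : ω ∈ Omega n s₀) (i : Fin n) {x : ℝ}
    (hx : 0 ≤ x) : jumpAndFreeze ω i x ∈ Omega n s₀ := by
  refine ⟨(if_pos (Fin.zero_le _)).trans hω.1, fun k => ?_⟩
  unfold jumpAndFreeze
  split_ifs
  exacts [hω.2 k, hx]

lemma restr_jumpAndFreeze (ω : Path n) {i j : Fin n} (hij : j ≤ i) (x : ℝ) :
    restr j (jumpAndFreeze ω i x) = restr j ω :=
  funext fun k => if_pos (Fin.le_def.2 ((Nat.succ_le_of_lt k.isLt).trans hij))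

lemma gains_jumpAndFreeze (D : Dyn n) (ω : Path n) (i : Fin n) (x : ℝ) :
    D.gains (jumpAndFreeze ω i x) =
      ∑ j ∈ Finset.Iio i, D.pos j (restr j ω) * (ω j.succ - ω j.castSucc) +
        D.pos i (restr i ω) * (x - ω i.castSucc) := by
  set ω' := jumpAndFreeze ω i x
  have before : ∀ k ≤ i.castSucc, ω' k = ω k := fun k hk => if_pos hk
  have after : ∀ k, i.castSucc < k → ω' k = x := fun k hk => if_neg hk.not_ge
  rw [Dyn.gains, ← Finset.sum_subset (Finset.subset_univ (Finset.Iic i)),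
    ← Finset.sum_Iio_add_eq_sum_Iic]
  · congr 1
    · refine Finset.sum_congr rfl fun j hj => ?_
      have hj := Finset.mem_Iio.1 hj
      rw [restr_jumpAndFreeze ω hj.le, before j.castSucc (Fin.castSucc_le_castSucc_iff.2 hj.le),
        before j.succ (Fin.succ_le_castSucc_iff.2 hj)]
    · rw [restr_jumpAndFreeze ω le_rfl, before i.castSucc le_rfl,
        after i.succ Fin.castSucc_lt_succ]
  · intro j _ hj
    have hj := not_le.1 (mt Finset.mem_Iic.2 hj)
    rw [after j.castSucc (Fin.castSucc_lt_castSucc_iff.2 hj),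
      after j.succ ((Fin.castSucc_lt_castSucc_iff.2 hj).trans Fin.castSucc_lt_succ), sub_self,
      mul_zero]

lemma pos_nonneg_of_le_gains {D : Dyn n} {C : ℝ} (h : ∀ ω ∈ Omega n s₀, C ≤ D.gains ω)
    {ω : Path n} (hω : ω ∈ Omega n s₀) (i : Fin n) : 0 ≤ D.pos i (restr i ω) :=
  nonneg_of_forall_le_add_mul_sub fun x hx =>
    (h _ (jumpAndFreeze_mem_Omega hω i hx)).trans_eq (gains_jumpAndFreeze D ω i x)

lemma price_mem_superhedgePrices_of_le {f : Path n → ℝ} {C : ℝ} (hC : ∀ ω ∈ Omega n s₀, C ≤ f ω)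
    (X : Static n) (D : Dyn n) (h : ∀ ω ∈ Omega n s₀, f ω ≤ X.putPayoff ω + D.gains ω) :
    X.price c ∈ superhedgePrices s₀ c f := by
  obtain ⟨A, hA⟩ := exists_putPayoff_le (s₀ := s₀) X
  have le_gains : ∀ ω ∈ Omega n s₀, C - A ≤ D.gains ω := fun ω hω => by
    linarith [hC ω hω, h ω hω, hA ω hω]
  refine ⟨X, D.posPart, D.nonneg_posPart, rfl, fun ω hω => ?_⟩
  rw [Dyn.gains_posPart (pos_nonneg_of_le_gains le_gains hω)]
  exact h ω hω

lemma superhedgePrices_add_gains {f : Path n → ℝ} {C : ℝ} (hC : ∀ ω ∈ Omega n s₀, C ≤ f ω)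
    {D : Dyn n} (hD : D.Nonneg) :
    superhedgePrices s₀ c (f + D.gains) = superhedgePrices s₀ c f := by
  refine Subset.antisymm ?_ fun q hq => ?_
  · rintro _ ⟨X, E, -, rfl, h⟩
    refine price_mem_superhedgePrices_of_le hC X (E + (-1 : ℝ) • D) fun ω hω => ?_
    have := h ω hω
    rw [Pi.add_apply] at this
    rw [Dyn.gains_add, Dyn.gains_smul]
    linarith
  · rw [← add_zero q]
    exact superhedgePrices_add_subset (add_mem_add hq (gains_mem_superhedgePrices hD))

end NoShortSelling

section AsymptoticallyLinear

open BoundedContinuousFunction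

variable {n : ℕ} {s₀ : ℝ} {w : Fin n → ℝ} {G : (Fin n → ℝ) → ℝ} {C : ℝ}

/-- The total weight `w k + ⋯ + w (n - 1)`. Since `w j` is the weight of `S_{j+1}`, this is the
sensitivity of `∑ w_j S_{j+1}` to a parallel shift of the prices after the date `k`. -/
def tailSum (w : Fin n → ℝ) (k : ℕ) : ℝ := ∑ j with k ≤ (j : Fin n).val, w j

lemma tailSum_eq_zero (w : Fin n → ℝ) : tailSum w n = 0 := by
  rw [tailSum, Finset.filter_false_of_mem fun j _ => j.isLt.not_ge, Finset.sum_empty]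

lemma tailSum_eq_sum_Ici (w : Fin n → ℝ) (i : Fin n) : tailSum w i = ∑ j ∈ Finset.Ici i, w j := by
  refine Finset.sum_congr (Finset.ext fun j => ?_) fun _ _ => rfl
  rw [Finset.mem_filter_univ, Finset.mem_Ici, Fin.le_def]

lemma tailSum_eq_add (w : Fin n → ℝ) (i : Fin n) : tailSum w i = w i + tailSum w (i + 1) := by
  have later : ∑ j ∈ Finset.Ioi i, w j = tailSum w (i + 1) := by
    refine Finset.sum_congr (Finset.ext fun j => ?_) fun _ _ => rfl
    rw [Finset.mem_filter_univ, Finset.mem_Ioi, Fin.lt_def, Nat.succ_le_iff]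
  rw [tailSum_eq_sum_Ici, ← Finset.add_sum_Ioi_eq_sum_Ici, later]

lemma tailSum_const (a : ℝ) (i : Fin n) : tailSum (fun _ : Fin n => a) i = (n - (i : ℕ)) * a := by
  rw [tailSum_eq_sum_Ici, Finset.sum_const, Fin.card_Ici, nsmul_eq_mul, Nat.cast_sub i.isLt.le]

lemma gains_const_tailSum (w : Fin n → ℝ) (ω : Path n) :
    (Dyn.const fun i => tailSum w i).gains ω = ∑ k, w k * (ω k.succ - ω 0) :=
  calc _ = ∑ i : Fin n, ∑ k ∈ Finset.Ici i, w k * (ω i.succ - ω i.castSucc) :=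
        Finset.sum_congr rfl fun i _ => by
          rw [← Finset.sum_mul, ← tailSum_eq_sum_Ici]
          rfl
    _ = ∑ k : Fin n, ∑ i ∈ Finset.Iic k, w k * (ω i.succ - ω i.castSucc) :=
        Finset.sum_comm' fun i k => by simp only [Finset.mem_Ici, Finset.mem_Iic, Finset.mem_univ,
          true_and, and_true]
    _ = _ := Finset.sum_congr rfl fun k _ => by rw [← Finset.mul_sum, Fin.sum_Iic_sub]

lemma mkPath_mem_Omega (hs₀ : 0 ≤ s₀) {i : Fin n} {s : Fin i → ℝ} (hs : 0 ≤ s) {x : ℝ}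
    (hx : 0 ≤ x) {t : Fin (n - ((i : ℕ) + 1)) → ℝ} (ht : 0 ≤ t) :
    mkPath s₀ i s x t ∈ Omega n s₀ := by
  refine ⟨dif_pos rfl, fun k => ?_⟩
  unfold mkPath
  split_ifs
  exacts [hs₀, hs _, hx, ht _]

lemma tailCoords_mkPath (i : Fin n) (s : Fin i → ℝ) (x : ℝ) (t : Fin (n - ((i : ℕ) + 1)) → ℝ) :
    tailCoords (mkPath s₀ i s x t) = tailCoords (mkPath s₀ i s 0 t) + Pi.single i x := by
  funext k
  rcases eq_or_ne k i with rfl | hk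
  · simp [tailCoords, mkPath]
  · simp [tailCoords, mkPath, hk, Fin.val_ne_of_ne hk]

lemma tendsto_mul_inv_of_abs_sub_le {g : ℝ → ℝ} {a b C : ℝ}
    (h : ∀ᶠ x in atTop, |g x - (a + b * x)| ≤ C) :
    Tendsto (fun x => g x * x⁻¹) atTop (𝓝 b) := by
  have remainder : Tendsto (fun x => x⁻¹ * (g x - (a + b * x))) atTop (𝓝 0) :=
    tendsto_inv_atTop_zero.zero_mul_isBoundedUnder_le ⟨C, eventually_map.2 h⟩
  have main : Tendsto (fun x => b + a * x⁻¹) atTop (𝓝 b) := by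
    simpa only [mul_zero, add_zero] using (tendsto_inv_atTop_zero.const_mul a).const_add b
  rw [← zero_add b]
  refine (remainder.add main).congr' ((eventually_ne_atTop 0).mono fun x hx => ?_)
  field_simp
  ring

lemma tendsto_payoff_mkPath (hs₀ : 0 ≤ s₀) (hC : ∀ s, 0 ≤ s → |G s - w ⬝ᵥ s| ≤ C) {i : Fin n}
    {s : Fin i → ℝ} (hs : 0 ≤ s) {t : Fin (n - ((i : ℕ) + 1)) → ℝ} (ht : 0 ≤ t) :
    Tendsto (fun x => G (tailCoords (mkPath s₀ i s x t)) * x⁻¹) atTop (𝓝 (w i)) := by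
  refine tendsto_mul_inv_of_abs_sub_le (a := w ⬝ᵥ tailCoords (mkPath s₀ i s 0 t)) (C := C) ?_
  filter_upwards [eventually_ge_atTop 0] with x hx
  rw [← dotProduct_single, ← dotProduct_add, ← tailCoords_mkPath]
  exact hC _ fun k => (mkPath_mem_Omega hs₀ hs hx ht).2 k.succ

lemma IsBetaFamily.eq_tailSum (hs₀ : 0 ≤ s₀) (hw : ∀ i : Fin n, 0 ≤ tailSum w i)
    (hC : ∀ s, 0 ≤ s → |G s - w ⬝ᵥ s| ≤ C) {β : (i : Fin (n + 1)) → (Fin i → ℝ) → ℝ}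
    (hβ : IsBetaFamily s₀ (Omega n s₀) (fun s => (G s : EReal)) β) (i : Fin (n + 1)) :
    ∀ s, 0 ≤ s → β i s = tailSum w i := by
  induction i using Fin.reverseInduction with
  | last => exact fun s _ => (hβ.1 s).trans (tailSum_eq_zero w).symm
  | cast i ih =>
    intro s hs
    have limsup_eq : ∀ t : Fin (n - ((i : ℕ) + 1)) → ℝ, 0 ≤ t →
        limsup (fun x : ℝ => if mkPath s₀ i s x t ∈ Omega n s₀ then
          (β i.succ (Fin.snoc s x) : EReal) + G (tailCoords (mkPath s₀ i s x t)) * (x⁻¹ : ℝ)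
          else 0) atTop = tailSum w i := fun t ht => by
      have hlim := (tendsto_payoff_mkPath hs₀ hC hs ht).const_add (tailSum w (i + 1))
      rw [add_comm _ (w i), ← tailSum_eq_add] at hlim
      refine (((continuous_coe_real_ereal.tendsto _).comp hlim).congr' ?_).limsup_eq
      filter_upwards [eventually_ge_atTop 0] with x hx
      have snoc_nonneg : (0 : Fin (i + 1) → ℝ) ≤ Fin.snoc s x :=
        Fin.lastCases (by simpa using hx) fun k => by simpa using hs k
      rw [if_pos (mkPath_mem_Omega (i := i) hs₀ hs hx ht), ih _ snoc_nonneg]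
      rfl
    have iSup_eq := (iSup_congr fun t => iSup_congr (limsup_eq t)).trans
      (biSup_const (s := Ici 0) ⟨0, self_mem_Ici⟩)
    have := (hβ.2 i s hs).trans (congrArg (max 0) iSup_eq)
    rw [max_eq_right (EReal.coe_nonneg.2 (hw i))] at this
    exact EReal.coe_injective this

end AsymptoticallyLinear

section AsymptoticallyLinearDuality

open BoundedContinuousFunction

variable {n : ℕ} {s₀ : ℝ} {μ : Fin n → Measure ℝ} {w : Fin n → ℝ} {G : (Fin n → ℝ) → ℝ} {C : ℝ}

lemma exists_boundedContinuous_add_gains (hG : ContinuousOn G (Ici 0))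
    (hC : ∀ s, 0 ≤ s → |G s - w ⬝ᵥ s| ≤ C) :
    ∃ F : Path n →ᵇ ℝ, ∀ ω ∈ Omega n s₀,
      G (tailCoords ω) = F ω + (Dyn.const fun i => tailSum w i).gains ω := by
  have tail_nonneg : MapsTo (tailCoords (n := n)) (Ici 0) (Ici 0) := fun ω hω k => hω k.succ
  have tail_cont : Continuous (tailCoords (n := n)) :=
    continuous_pi fun k => continuous_apply k.succ
  have residual_cont : ContinuousOn (fun ω : Path n => G (tailCoords ω) - w ⬝ᵥ tailCoords ω)
      (Ici 0) :=
    (hG.comp tail_cont.continuousOn tail_nonneg).sub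
      (continuous_const.dotProduct tail_cont).continuousOn
  obtain ⟨F, hF⟩ := exists_boundedContinuous_eqOn_nonneg residual_cont
    fun ω hω => hC _ (tail_nonneg hω)
  refine ⟨F + .const _ (∑ k, w k * s₀), fun ω hω => ?_⟩
  rw [gains_const_tailSum, hω.1, BoundedContinuousFunction.add_apply, const_apply, hF hω.2]
  simp only [mul_sub, Finset.sum_sub_distrib, dotProduct, tailCoords]
  ring

lemma integral_gains_const_tailSum {Q : Measure (Path n)} (hQ : Q ∈ PiMu s₀ μ)
    (hmom : ∀ i, Integrable (fun x => x) (μ i)) (w : Fin n → ℝ) :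
    ∫ ω, (Dyn.const fun i => tailSum w i).gains ω ∂Q = -∑ i, w i * (s₀ - ∫ x, x ∂μ i) := by
  have := hQ.1
  have hint := integrable_coord hQ hmom
  have initial : ∫ ω, ω 0 ∂Q = s₀ := by
    rw [integral_congr_ae ((ae_mem_Omega hQ).mono fun ω hω => hω.1), integral_const,
      probReal_univ, one_smul]
  have increment_int : ∀ k : Fin n, Integrable (fun ω : Path n => w k * (ω k.succ - ω 0)) Q :=
    fun k => ((hint k.succ).sub (hint 0)).const_mul (w k)
  simp only [gains_const_tailSum]
  rw [integral_finsetSum _ fun k _ => increment_int k, ← Finset.sum_neg_distrib]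
  refine Finset.sum_congr rfl fun k _ => ?_
  have mean : ∫ ω, ω k.succ ∂Q = ∫ x, x ∂μ k := integral_comp_coord hQ k measurable_id
  rw [integral_const_mul, integral_sub (hint _) (hint _), initial, mean, ← mul_neg, neg_sub]

lemma V_add_gains_eq (hmom : ∀ i, Integrable (fun x => x) (μ i)) (hne : (MSet s₀ μ).Nonempty)
    (F : Path n →ᵇ ℝ) {D : Dyn n} (hD : D.Nonneg) {f : Path n → ℝ}
    (hf : ∀ ω ∈ Omega n s₀, f ω = F ω + D.gains ω) :
    V Static.putPayoff (putPrice μ) (Omega n s₀) (fun ω => (f ω : EReal)) =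
      superhedgingPrice s₀ (putPrice μ) F := by
  have prices_eq : superhedgePrices s₀ (putPrice μ) f = superhedgePrices s₀ (putPrice μ) F :=
    (superhedgePrices_congr hf).trans <| superhedgePrices_add_gains
      (fun ω _ => (abs_le.1 (F.norm_coe_le_norm ω)).1) hD
  rw [V_eq_superhedgingPrice, superhedgingPrice, prices_eq, superhedgingPrice]
  · rw [prices_eq]
    exact nonempty_superhedgePrices _ F
  · rw [prices_eq]
    exact bddBelow_superhedgePrices hmom hne fun Q hQ =>
      have := hQ.1.1
      F.integrable Q

lemma iSup_eexpE_add_gains_eq (hmom : ∀ i, Integrable (fun x => x) (μ i))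
    (hne : (MSet s₀ μ).Nonempty) (F : Path n →ᵇ ℝ) (D : Dyn n) {a : ℝ}
    (hD : ∀ Q ∈ MSet s₀ μ, ∫ ω, D.gains ω ∂Q = a) {f : Path n → ℝ}
    (hf : ∀ ω ∈ Omega n s₀, f ω = F ω + D.gains ω) :
    ⨆ Q ∈ MSet s₀ μ, eexpE Q (fun ω => (f ω : EReal)) =
      ((superhedgingPrice s₀ (putPrice μ) F + a : ℝ) : EReal) := by
  have eexpE_eq : ∀ Q ∈ MSet s₀ μ,
      eexpE Q (fun ω => (f ω : EReal)) = ((∫ ω, F ω ∂Q + a : ℝ) : EReal) := fun Q hQ => by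
    have := hQ.1.1
    have f_ae : (F + D.gains : Path n → ℝ) =ᵐ[Q] f :=
      (ae_mem_Omega hQ.1).mono fun ω hω => (hf ω hω).symm
    have hint := (F.integrable Q).add (integrable_gains D (integrable_coord hQ.1 hmom))
    rw [eexpE_coe (hint.congr f_ae), ← integral_congr_ae f_ae,
      integral_add' (F.integrable Q) (integrable_gains D (integrable_coord hQ.1 hmom)), hD Q hQ]
  obtain ⟨⟨Q₀, hQ₀, attained⟩, upper⟩ := isGreatest_superhedgingPrice hmom hne F
  refine le_antisymm (iSup₂_le fun Q hQ => ?_) (le_iSup₂_of_le Q₀ hQ₀ ?_)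
  · rw [eexpE_eq Q hQ, EReal.coe_le_coe_iff]
    exact add_le_add_left (upper ⟨Q, hQ, rfl⟩) a
  · rw [eexpE_eq Q₀ hQ₀, ← attained]

theorem asian_duality_gap_general {n : ℕ} {s₀ : ℝ} {μ : Fin n → Measure ℝ} {w : Fin n → ℝ}
    {G : (Fin n → ℝ) → ℝ} {C : ℝ} (hmom : ∀ i, Integrable (fun x => x) (μ i))
    (hne : (MSet s₀ μ).Nonempty) (hw : ∀ i : Fin n, 0 ≤ tailSum w i)
    (hG : ContinuousOn G (Ici 0)) (hC : ∀ s, 0 ≤ s → |G s - w ⬝ᵥ s| ≤ C) :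
    (∀ β : (i : Fin (n + 1)) → (Fin i → ℝ) → ℝ,
      IsBetaFamily s₀ (Omega n s₀) (fun s => (G s : EReal)) β →
        ∀ (i : Fin (n + 1)) (s : Fin i → ℝ), 0 ≤ s → β i s = tailSum w i) ∧
    V Static.putPayoff (putPrice μ) (Omega n s₀) (fun ω => (G (tailCoords ω) : EReal)) =
      (⨆ Q ∈ MSet s₀ μ, eexpE Q (fun ω => (G (tailCoords ω) : EReal))) +
        ((∑ i, w i * (s₀ - ∫ x, x ∂μ i) : ℝ) : EReal) := by
  obtain ⟨F, hF⟩ := exists_boundedContinuous_add_gains (s₀ := s₀) hG hC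
  refine ⟨fun β hβ => hβ.eq_tailSum (initial_nonneg hne.some_mem.1) hw hC, ?_⟩
  rw [V_add_gains_eq hmom hne F (D := .const fun i => tailSum w i) (fun i _ => hw i) hF,
    iSup_eexpE_add_gains_eq hmom hne F _
      (fun Q hQ => integral_gains_const_tailSum hQ.1 hmom w) hF,
    ← EReal.coe_add, neg_add_cancel_right]

end AsymptoticallyLinearDuality

lemma abs_max_sub_zero_sub_le {a K : ℝ} (hK : 0 ≤ K) (ha : 0 ≤ a) : |max (a - K) 0 - a| ≤ K :=
  abs_le.2 ⟨by linarith [le_max_left (a - K) 0], by linarith [max_le (sub_le_self a hK) ha]⟩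

/-- Asian option duality gap, Example 1: with `𝔓 = Ω`, the
recursively defined functions of the duality-gap theorem for the Asian payoff are
the constants `β_i = (n − i)/n`, and the put-based superhedging price exceeds the
primal value by `(1/n) Σ_{i=1}^n (s₀ − ∫ x μ_i(dx))`. -/
theorem asian_duality_gap
    {n : ℕ} (hn : 1 ≤ n) {s₀ : ℝ} (hs₀ : 0 < s₀) (K : ℝ) (hK : 0 ≤ K)
    (μ : Fin n → Measure ℝ) (hprob : ∀ i, IsProbabilityMeasure (μ i))
    (hsupp : ∀ i, μ i (Set.Iio 0) = 0) (hmom : ∀ i, Integrable (fun x => x) (μ i))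
    (hA : AssumptionA s₀ μ) (hne : (MSet s₀ μ).Nonempty) :
    (∀ β : (i : Fin (n + 1)) → (Fin i → ℝ) → ℝ,
      IsBetaFamily s₀ (Omega n s₀)
        (fun s => ((max ((∑ i, s i) / n - K) 0 : ℝ) : EReal)) β →
      ∀ (i : Fin n) (s : Fin i → ℝ), (∀ k, 0 ≤ s k) →
        β ⟨(i : ℕ), by have := i.isLt; omega⟩ s = ((n : ℝ) - (i : ℕ)) / n) ∧
    V Static.putPayoff (fun i K' => ∫ x, max (K' - x) 0 ∂(μ i)) (Omega n s₀)
        (fun ω => ((max ((∑ i, tailCoords ω i) / n - K) 0 : ℝ) : EReal)) =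
      (⨆ Q ∈ MSet s₀ μ,
        eexpE Q (fun ω => ((max ((∑ i, tailCoords ω i) / n - K) 0 : ℝ) : EReal))) +
        (((1 / n : ℝ) * ∑ i : Fin n, (s₀ - ∫ x, x ∂(μ i)) : ℝ) : EReal) := by
  have tailSum_eq : ∀ i : Fin n, tailSum (fun _ : Fin n => (1 / n : ℝ)) i = (n - (i : ℕ)) / n :=
    fun i => (tailSum_const _ i).trans (mul_one_div _ _)
  have tailSum_nonneg : ∀ i : Fin n, 0 ≤ tailSum (fun _ : Fin n => (1 / n : ℝ)) i := fun i =>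
    Finset.sum_nonneg fun _ _ => by positivity
  have abs_sub_le : ∀ s : Fin n → ℝ, 0 ≤ s →
      |max ((∑ i, s i) / n - K) 0 - (fun _ => (1 / n : ℝ)) ⬝ᵥ s| ≤ K := fun s hs => by
    rw [dotProduct, ← Finset.mul_sum, one_div_mul_eq_div]
    exact abs_max_sub_zero_sub_le hK
      (div_nonneg (Finset.sum_nonneg fun i _ => hs i) n.cast_nonneg)
  obtain ⟨beta_eq, V_eq⟩ := asian_duality_gap_general hmom hne tailSum_nonneg
    (G := fun s => max ((∑ i, s i) / n - K) 0) (by fun_prop) abs_sub_le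
  refine ⟨fun β hβ i s hs => (beta_eq β hβ i.castSucc s hs).trans (tailSum_eq i), ?_⟩
  rw [Finset.mul_sum]
  exact V_eq

end RobustFin
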